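/- arXiv:1703.01628 — 3 statements merged into one kernel-verified Lean document; each statement's English description precedes it below -/
import Mathlib

section
/- For every n ∈ ℤ, every ξ ∈ ℝ and every s > 0, the integral ∫₀^∞ K_n^α(s,s') (s')^{−iξ−1} sin α · s' ds' converges absolutely and equals λ_n(ξ) · s^{−iξ−1}, where λ_n(ξ) = sin α · ∫₀^∞ t^{1+iξ} K_n^α(t,1) dt/t (this integral also converging absolutely). In other words, t ↦ t^{−iξ−1} is a generalized eigenfunction of the n-th modal operator with eigenvalue λ_n(ξ). -/
open Real

/-- Parametrization of the infinite straight cone of opening angle `2α`. -/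
noncomputable def coneParam (α t θ : ℝ) : EuclideanSpace ℝ (Fin 3) :=
  !₂[sin α * t * cos θ, sin α * t * sin θ, cos α * t]

/-- Outward unit normal of the cone. -/
noncomputable def coneNormal (α θ : ℝ) : EuclideanSpace ℝ (Fin 3) :=
  !₂[cos α * cos θ, cos α * sin θ, -sin α]

/-- The layer-potential kernel of the infinite straight cone. -/
noncomputable def coneKernel (α t θ t' θ' : ℝ) : ℝ :=
  (inner ℝ (coneParam α t θ - coneParam α t' θ') (coneNormal α θ) : ℝ) /
    ‖coneParam α t' θ' - coneParam α t θ‖ ^ 3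

/-- The `n`-th modal kernel `K_n^α(t,t') = (1/(2π)) ∫₀^{2π} e^{−inθ} K^{Γ_α}(t,θ,t',0) dθ`. -/
noncomputable def modalKernel (α : ℝ) (n : ℤ) (t t' : ℝ) : ℂ :=
  ((1 / (2 * π) : ℝ) : ℂ) *
    ∫ θ in (0:ℝ)..(2 * π), Complex.exp (-Complex.I * (n : ℂ) * (θ : ℂ)) * (coneKernel α t θ t' 0 : ℂ)

open MeasureTheory

namespace ConeAux

lemma inner_eq (α t θ t' : ℝ) :
    (inner ℝ (coneParam α t θ - coneParam α t' 0) (coneNormal α θ) : ℝ)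
      = sin α * cos α * t' * (1 - cos θ) := by
  simp [coneParam, coneNormal, PiLp.inner_apply, Fin.sum_univ_three]
  linear_combination (sin α * cos α * t) * (sin_sq_add_cos_sq θ)

lemma normsq_eq (α t θ t' : ℝ) :
    ‖coneParam α t' 0 - coneParam α t θ‖ ^ 2
      = (t - t') ^ 2 + 2 * sin α ^ 2 * t * t' * (1 - cos θ) := by
  rw [EuclideanSpace.norm_sq_eq]
  simp [coneParam, Fin.sum_univ_three]
  linear_combination (sin α ^ 2 * t ^ 2) * (sin_sq_add_cos_sq θ) + (t-t')^2 * sin_sq_add_cos_sq α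

lemma kernel_eq (α t θ t' : ℝ) : coneKernel α t θ t' 0 =
    sin α * cos α * t' * (1 - cos θ) /
      (√((t - t') ^ 2 + 2 * sin α ^ 2 * t * t' * (1 - cos θ))) ^ 3 := by
  unfold coneKernel
  rw [inner_eq, ← normsq_eq, Real.sqrt_sq (norm_nonneg _)]

lemma kernel_hom (α t θ t' : ℝ) (h : 0 < t') : coneKernel α t θ t' 0 =
    (t' ^ 2)⁻¹ * coneKernel α (t / t') θ 1 0 := by
  rw [kernel_eq, kernel_eq]
  have : (t - t') ^ 2 + 2 * sin α ^ 2 * t * t' * (1 - cos θ)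
      = t' ^ 2 * ((t / t' - 1) ^ 2 + 2 * sin α ^ 2 * (t / t') * 1 * (1 - cos θ)) := by
    field_simp
  rw [this, Real.sqrt_mul (sq_nonneg _), Real.sqrt_sq h.le, mul_pow, ← div_eq_inv_mul, div_div]
  rw [show t' ^ 3 * √((t / t' - 1) ^ 2 + 2 * sin α ^ 2 * (t / t') * 1 * (1 - cos θ)) ^ 3
    = t' * (√((t / t' - 1) ^ 2 + 2 * sin α ^ 2 * (t / t') * 1 * (1 - cos θ)) ^ 3 * t' ^ 2) by ring,
    show sin α * cos α * t' * (1 - cos θ) = t' * (sin α * cos α * 1 * (1 - cos θ)) by ring,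
    mul_div_mul_left _ _ h.ne']

lemma modal_hom (α : ℝ) (n : ℤ) (t t' : ℝ) (h : 0 < t') : modalKernel α n t t' =
    (((t' ^ 2)⁻¹ : ℝ) : ℂ) * modalKernel α n (t / t') 1 := by
  unfold modalKernel
  simp_rw [fun θ => kernel_hom α t θ t' h]
  rw [mul_left_comm]
  congr 1
  rw [← intervalIntegral.integral_const_mul]
  refine intervalIntegral.integral_congr fun θ _ => ?_
  push_cast
  ring

lemma modal_meas (α : ℝ) (n : ℤ) : Measurable (fun t => modalKernel α n t 1) := by
  unfold modalKernel
  simp_rw [kernel_eq, intervalIntegral.integral_of_le two_pi_pos.le]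
  apply Measurable.const_mul
  apply StronglyMeasurable.measurable
  apply StronglyMeasurable.integral_prod_right
    (f := fun (t : ℝ) (θ : ℝ) => Complex.exp (-Complex.I * (n : ℂ) * (θ : ℂ)) * ((sin α * cos α * 1 * (1 - cos θ) /
      (√((t - 1) ^ 2 + 2 * sin α ^ 2 * t * 1 * (1 - cos θ))) ^ 3 : ℝ) : ℂ))
  apply Measurable.stronglyMeasurable
  unfold Function.uncurry
  fun_prop

/-- dominating function in the radial variable -/
noncomputable def g (t : ℝ) : ℝ := |t - 1| ^ (-(1/2) : ℝ) * (1 + t ^ 2) ^ (-(5/4) : ℝ)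

/-- dominating function in the angular variable -/
noncomputable def h (θ : ℝ) : ℝ := (1 - cos θ) ^ (-(1/4) : ℝ)

lemma h_nonneg (θ : ℝ) : 0 ≤ h θ := Real.rpow_nonneg (by linarith [cos_le_one θ]) _

lemma g_nonneg (θ : ℝ) : 0 ≤ g θ := by unfold g; positivity

lemma kernel_bound (α : ℝ) (h0 : 0 < sin α) : ∃ C : ℝ, 0 ≤ C ∧ ∀ t θ : ℝ, 0 < t → t ≠ 1 →
    |coneKernel α t θ 1 0| ≤ C * g t * h θ := by
  refine ⟨(sin α ^ 2 / 2) ^ (-(5/4) : ℝ), by positivity, fun t θ ht ht1 => ?_⟩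
  rw [kernel_eq]
  set u := 1 - cos θ with hu
  have hu0 : 0 ≤ u := by linarith [cos_le_one θ]
  have hu2 : u ≤ 2 := by linarith [neg_one_le_cos θ]
  rcases hu0.eq_or_lt with h' | hupos
  · rw [← h']
    simp only [mul_zero, zero_div, abs_zero]
    exact mul_nonneg (mul_nonneg (by positivity) (g_nonneg t)) (h_nonneg θ)
  set D := (t - 1) ^ 2 + 2 * sin α ^ 2 * t * 1 * u with hD
  have ha : 0 < |t - 1| := abs_pos.2 (sub_ne_zero.2 ht1)
  have hDa : |t - 1| ^ 2 ≤ D := by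
    rw [sq_abs, hD]
    have : 0 ≤ 2 * sin α ^ 2 * t * 1 * u := by positivity
    linarith
  have hD0 : 0 < D := lt_of_lt_of_le (by positivity) hDa
  have hs1 : sin α ^ 2 ≤ 1 := sin_sq_le_one α
  have hDb : sin α ^ 2 / 2 * u * (1 + t ^ 2) ≤ D := by
    have hw : sin α ^ 2 * u ≤ 2 := by nlinarith
    have hw0 : 0 ≤ sin α ^ 2 * u := by positivity
    rw [hD]
    have e : (t - 1) ^ 2 + 2 * sin α ^ 2 * t * 1 * u - sin α ^ 2 / 2 * u * (1 + t ^ 2)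
      = (2 - sin α ^ 2 * u) / 2 * (t - 1)^2 + sin α ^ 2 * u * t := by ring
    have : 0 ≤ (2 - sin α ^ 2 * u) / 2 * (t - 1)^2 + sin α ^ 2 * u * t := by
      have : 0 ≤ 2 - sin α ^ 2 * u := by linarith
      positivity
    linarith
  have hpow : √D ^ 3 = D ^ (1/4 : ℝ) * D ^ (5/4 : ℝ) := by
    rw [← Real.rpow_add hD0, Real.sqrt_eq_rpow, ← Real.rpow_natCast, ← Real.rpow_mul hD0.le]
    norm_num
  have h1 : |t - 1| ^ (1/2 : ℝ) ≤ D ^ (1/4 : ℝ) := by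
    have := Real.rpow_le_rpow (by positivity) hDa (by norm_num : (0:ℝ) ≤ 1/4)
    rwa [← Real.rpow_natCast, ← Real.rpow_mul ha.le, show ((2:ℕ):ℝ) * (1/4) = 1/2 by norm_num] at this
  have h2 : (sin α ^ 2 / 2) ^ (5/4 : ℝ) * u ^ (5/4 : ℝ) * (1 + t ^ 2) ^ (5/4 : ℝ) ≤ D ^ (5/4 : ℝ) := by
    have := Real.rpow_le_rpow (by positivity) hDb (by norm_num : (0:ℝ) ≤ 5/4)
    rwa [Real.mul_rpow (by positivity) (by positivity), Real.mul_rpow (by positivity) hu0] at this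
  have hnum : |sin α * cos α * 1 * u| ≤ u := by
    rw [abs_mul, abs_of_nonneg hu0, mul_one, abs_mul]
    have := mul_le_one₀ (abs_sin_le_one α) (abs_nonneg (cos α)) (abs_cos_le_one α)
    nlinarith
  rw [abs_div, abs_of_pos (by positivity : 0 < √D ^ 3), hpow]
  have hu54 : u ^ (5/4 : ℝ) = u * u ^ (1/4 : ℝ) := by
    rw [show (5/4 : ℝ) = 1 + 1/4 by norm_num, Real.rpow_add hupos, Real.rpow_one]
  calc _ ≤ u / (|t - 1| ^ (1/2 : ℝ) * ((sin α ^ 2 / 2) ^ (5/4 : ℝ) * u ^ (5/4 : ℝ) * (1 + t ^ 2) ^ (5/4 : ℝ))) := by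
        gcongr
    _ = _ := by
        unfold g h
        rw [← hu, Real.rpow_neg (by positivity), Real.rpow_neg (by positivity),
          Real.rpow_neg (by positivity), Real.rpow_neg (by positivity), hu54]
        field_simp

lemma g_int : IntegrableOn g (Set.Ioi 0) := by
  have hb : Integrable (fun t : ℝ => (Set.Ioo (0:ℝ) 2).indicator (fun t => |t - 1| ^ (-(1/2) : ℝ)) t + (1 + t ^ 2)⁻¹) := by
    refine Integrable.add ?_ integrable_inv_one_add_sq
    rw [integrable_indicator_iff measurableSet_Ioo]
    have h1 : IntervalIntegrable (fun x : ℝ => x ^ (-(1/2) : ℝ)) volume 0 1 :=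
      intervalIntegral.intervalIntegrable_rpow' (by norm_num)
    have h2 : IntervalIntegrable (fun x : ℝ => |x - 1| ^ (-(1/2) : ℝ)) volume 1 2 := by
      have := h1.comp_sub_right 1
      norm_num at this
      refine this.congr_ae ?_
      rw [Filter.EventuallyEq, ae_restrict_iff' measurableSet_uIoc]
      refine ae_of_all _ fun x hx => ?_
      rw [Set.uIoc_of_le (by norm_num)] at hx
      rw [abs_of_pos (by linarith [hx.1])]
    have h3 : IntervalIntegrable (fun x : ℝ => |x - 1| ^ (-(1/2) : ℝ)) volume 0 1 := by
      have := (h1.comp_sub_left 1).symm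
      norm_num at this
      refine this.congr_ae ?_
      rw [Filter.EventuallyEq, ae_restrict_iff' measurableSet_uIoc]
      refine ae_of_all _ fun x hx => ?_
      rw [Set.uIoc_of_le (by norm_num)] at hx
      rw [abs_sub_comm, abs_of_nonneg (by linarith [hx.2])]
    have h4 := h3.trans h2
    rw [intervalIntegrable_iff_integrableOn_Ioo_of_le (by norm_num)] at h4
    exact h4
  refine Integrable.mono' hb.integrableOn ?_ ?_
  · unfold g
    exact Measurable.aestronglyMeasurable (by fun_prop)
  · rw [ae_restrict_iff' measurableSet_Ioi]
    refine ae_of_all _ fun t ht => ?_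
    rw [Real.norm_of_nonneg (g_nonneg t)]
    have ht0 : (0:ℝ) < t := ht
    by_cases h2 : t < 2
    · rw [Set.indicator_of_mem (show t ∈ Set.Ioo (0:ℝ) 2 from ⟨ht0, h2⟩)]
      have : (1 + t ^ 2) ^ (-(5/4) : ℝ) ≤ 1 :=
        Real.rpow_le_one_of_one_le_of_nonpos (by nlinarith) (by norm_num)
      have h3 : 0 ≤ |t - 1| ^ (-(1/2) : ℝ) := by positivity
      have h4 : 0 ≤ (1 + t ^ 2)⁻¹ := by positivity
      unfold g
      nlinarith
    · rw [Set.indicator_of_notMem (fun hh => h2 hh.2), zero_add]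
      push Not at h2
      have h3 : |t - 1| ^ (-(1/2) : ℝ) ≤ 1 :=
        Real.rpow_le_one_of_one_le_of_nonpos (by rw [abs_of_nonneg (by linarith)]; linarith) (by norm_num)
      have h4 : (1 + t ^ 2) ^ (-(5/4) : ℝ) ≤ (1 + t ^ 2)⁻¹ := by
        rw [← Real.rpow_neg_one]
        exact Real.rpow_le_rpow_of_exponent_le (by nlinarith) (by norm_num)
      have h5 : 0 ≤ (1 + t ^ 2) ^ (-(5/4) : ℝ) := by positivity
      unfold g
      nlinarith

lemma h_int_half : IntervalIntegrable h volume 0 π := by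
  have h1 : IntervalIntegrable (fun x : ℝ => (2 / π ^ 2) ^ (-(1/4) : ℝ) * x ^ (-(1/2) : ℝ)) volume 0 π :=
    (intervalIntegral.intervalIntegrable_rpow' (by norm_num)).const_mul _
  refine h1.mono_fun' ?_ ?_
  · unfold h
    exact Measurable.aestronglyMeasurable (by fun_prop)
  · rw [Filter.EventuallyLE, ae_restrict_iff' measurableSet_uIoc]
    refine ae_of_all _ fun x hx => ?_
    rw [Set.uIoc_of_le pi_pos.le] at hx
    rw [Real.norm_of_nonneg (h_nonneg x)]
    have hc : cos x ≤ 1 - 2 / π ^ 2 * x ^ 2 :=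
      cos_le_one_sub_mul_cos_sq (by rw [abs_of_pos hx.1]; exact hx.2)
    have hx0 := hx.1
    have e : (2 / π ^ 2) ^ (-(1/4) : ℝ) * x ^ (-(1/2) : ℝ) = (2 / π ^ 2 * x ^ 2) ^ (-(1/4) : ℝ) := by
      rw [Real.mul_rpow (by positivity) (by positivity), ← Real.rpow_natCast x 2,
        ← Real.rpow_mul hx0.le]
      norm_num
    rw [e]
    unfold h
    exact Real.rpow_le_rpow_of_nonpos (by positivity) (by linarith) (by norm_num)

lemma h_int : IntervalIntegrable h volume 0 (2 * π) := by
  refine h_int_half.trans ?_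
  have := (h_int_half.comp_sub_left (2 * π)).symm
  rw [show 2 * π - π = π by ring, sub_zero] at this
  refine this.congr fun x _ => ?_
  simp [h, cos_two_pi_sub]

lemma modal_int (α : ℝ) (h0 : 0 < sin α) (n : ℤ) :
    IntegrableOn (fun t => modalKernel α n t 1) (Set.Ioi 0) := by
  obtain ⟨C, hC, hb⟩ := kernel_bound α h0
  refine Integrable.mono' (g_int.const_mul (1 / (2 * π) * C * ∫ θ in (0:ℝ)..(2*π), h θ))
    (modal_meas α n).aestronglyMeasurable ?_
  have hne : ∀ᵐ t : ℝ, t ≠ 1 := by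
    simp [ae_iff, measure_singleton]
  filter_upwards [ae_restrict_mem measurableSet_Ioi, ae_restrict_of_ae hne] with t ht ht1
  unfold modalKernel
  rw [norm_mul, Complex.norm_real, Real.norm_of_nonneg (by positivity)]
  have : ‖∫ θ in (0:ℝ)..(2 * π), Complex.exp (-Complex.I * (n : ℂ) * (θ : ℂ)) * (coneKernel α t θ 1 0 : ℂ)‖
      ≤ ∫ θ in (0:ℝ)..(2*π), C * g t * h θ := by
    refine intervalIntegral.norm_integral_le_of_norm_le two_pi_pos.le (ae_of_all _ fun θ _ => ?_)
      (h_int.const_mul _)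
    rw [norm_mul, Complex.norm_real, Complex.norm_exp]
    simpa using hb t θ ht ht1
  rw [intervalIntegral.integral_const_mul] at this
  calc _ ≤ 1 / (2 * π) * (C * g t * ∫ θ in (0:ℝ)..(2*π), h θ) := by gcongr
    _ = _ := by ring

lemma F_int (α : ℝ) (h0 : 0 < sin α) (n : ℤ) (ξ : ℝ) : IntegrableOn
      (fun t : ℝ => (t : ℂ) ^ (1 + Complex.I * (ξ : ℂ)) * modalKernel α n t 1 * (t : ℂ)⁻¹)
      (Set.Ioi 0) := by
  refine Integrable.mono (modal_int α h0 n) ?_ ?_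
  · have := modal_meas α n
    exact Measurable.aestronglyMeasurable (by fun_prop)
  · filter_upwards [ae_restrict_mem measurableSet_Ioi] with t ht
    have ht0 : (0:ℝ) < t := ht
    rw [norm_mul, norm_mul, norm_inv, Complex.norm_cpow_eq_rpow_re_of_pos ht0, Complex.norm_real,
      Real.norm_of_nonneg ht0.le]
    simp
    field_simp
    rfl

lemma image_eq (s : ℝ) (hs : 0 < s) : (fun x : ℝ => s / x) '' Set.Ioi 0 = Set.Ioi 0 := by
  ext y
  constructor
  · rintro ⟨x, hx, rfl⟩
    exact div_pos hs hx
  · intro hy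
    have hy0 : (0:ℝ) < y := hy
    exact ⟨s / y, div_pos hs hy0, by field_simp⟩

lemma key (α : ℝ) (n : ℤ) (ξ s x : ℝ) (hs : 0 < s) (hx : 0 < x) :
    modalKernel α n s x * (x : ℂ) ^ (-(Complex.I * (ξ : ℂ)) - 1) * ((sin α * x : ℝ) : ℂ)
    = (((sin α : ℝ) : ℂ) * (s : ℂ) ^ (-(Complex.I * (ξ : ℂ)) - 1)) *
      (|-s / x ^ 2| • (((s / x : ℝ) : ℂ) ^ (1 + Complex.I * (ξ : ℂ)) * modalKernel α n (s / x) 1 *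
        ((s / x : ℝ) : ℂ)⁻¹)) := by
  rw [modal_hom α n s x hx, neg_div, abs_neg, abs_of_pos (by positivity), Complex.real_smul]
  have hsc : (s : ℂ) ≠ 0 := by exact_mod_cast hs.ne'
  have hxc : (x : ℂ) ≠ 0 := by exact_mod_cast hx.ne'
  have e1 : ((s / x : ℝ) : ℂ) ^ (1 + Complex.I * (ξ : ℂ)) =
      (s : ℂ) ^ (1 + Complex.I * (ξ : ℂ)) * (x : ℂ) ^ (-(Complex.I * (ξ : ℂ)) - 1) := by
    rw [div_eq_mul_inv, Complex.ofReal_mul, Complex.mul_cpow_ofReal_nonneg hs.le (by positivity),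
      Complex.ofReal_inv, Complex.inv_cpow, ← Complex.cpow_neg]
    · congr 2; ring
    · rw [Complex.arg_ofReal_of_nonneg hx.le]; exact pi_pos.ne
  have e2 : (s : ℂ) ^ (-(Complex.I * (ξ : ℂ)) - 1) * (s : ℂ) ^ (1 + Complex.I * (ξ : ℂ)) = 1 := by
    rw [← Complex.cpow_add _ _ hsc]
    ring_nf
    simp
  rw [e1]
  push_cast
  field_simp
  linear_combination (-(modalKernel α n (s / x) 1 * Complex.sin α * (x : ℂ) ^ (-(Complex.I * (ξ : ℂ)) - 1))) * e2

end ConeAux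



/-- The power functions `t ↦ t^{−iξ−1}` are generalized eigenfunctions of the modal
operators on the infinite straight cone: for every `n`, `ξ` and `s > 0`, the integral
`∫₀^∞ K_n^α(s,s') (s')^{−iξ−1} sin α · s' ds'` converges absolutely and equals
`λ_n(ξ) · s^{−iξ−1}`, where `λ_n(ξ) = sin α · ∫₀^∞ t^{1+iξ} K_n^α(t,1) dt/t` (this
integral also converging absolutely). -/
theorem modal_generalized_eigenfunction (α : ℝ) (hα0 : 0 < α) (hαπ : α < π)
    (hα2 : α ≠ π / 2) (n : ℤ) (ξ s : ℝ) (hs : 0 < s) :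
    IntegrableOn
      (fun t : ℝ => (t : ℂ) ^ (1 + Complex.I * (ξ : ℂ)) * modalKernel α n t 1 * (t : ℂ)⁻¹)
      (Set.Ioi 0) ∧
    IntegrableOn
      (fun s' : ℝ => modalKernel α n s s' * (s' : ℂ) ^ (-(Complex.I * (ξ : ℂ)) - 1) *
        ((sin α * s' : ℝ) : ℂ))
      (Set.Ioi 0) ∧
    ∫ s' in Set.Ioi (0:ℝ), modalKernel α n s s' * (s' : ℂ) ^ (-(Complex.I * (ξ : ℂ)) - 1) *
        ((sin α * s' : ℝ) : ℂ)
      = (((sin α : ℝ) : ℂ) *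
          ∫ t in Set.Ioi (0:ℝ),
            (t : ℂ) ^ (1 + Complex.I * (ξ : ℂ)) * modalKernel α n t 1 * (t : ℂ)⁻¹) *
        (s : ℂ) ^ (-(Complex.I * (ξ : ℂ)) - 1) := by
  have h0 : 0 < sin α := sin_pos_of_pos_of_lt_pi hα0 hαπ
  have hF := ConeAux.F_int α h0 n ξ
  have hd : ∀ x ∈ Set.Ioi (0:ℝ), HasDerivWithinAt (fun x : ℝ => s / x) (-s / x ^ 2) (Set.Ioi 0) x := by
    intro x hx
    have hx0 : (0:ℝ) < x := hx
    have := ((hasDerivAt_inv hx0.ne').const_mul s).hasDerivWithinAt (s := Set.Ioi 0)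
    have e : -s / x ^ 2 = s * -(x ^ 2)⁻¹ := by ring
    rw [e]
    simpa only [div_eq_mul_inv] using this
  have hinj : Set.InjOn (fun x : ℝ => s / x) (Set.Ioi 0) := by
    intro x hx y hy hxy
    have hx0 : (0:ℝ) < x := hx
    have hy0 : (0:ℝ) < y := hy
    field_simp at hxy
    exact hxy.symm
  refine ⟨hF, ?_, ?_⟩
  · have h1 := (integrableOn_image_iff_integrableOn_abs_deriv_smul measurableSet_Ioi hd hinj
      (fun t : ℝ => (t : ℂ) ^ (1 + Complex.I * (ξ : ℂ)) * modalKernel α n t 1 * (t : ℂ)⁻¹)).1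
      (by rw [ConeAux.image_eq s hs]; exact hF)
    refine IntegrableOn.congr_fun (Integrable.const_mul h1
      (((sin α : ℝ) : ℂ) * (s : ℂ) ^ (-(Complex.I * (ξ : ℂ)) - 1))) ?_ measurableSet_Ioi
    intro x hx
    exact (ConeAux.key α n ξ s x hs hx).symm
  · have h2 := integral_image_eq_integral_abs_deriv_smul measurableSet_Ioi hd hinj
      (fun t : ℝ => (t : ℂ) ^ (1 + Complex.I * (ξ : ℂ)) * modalKernel α n t 1 * (t : ℂ)⁻¹)
    rw [ConeAux.image_eq s hs] at h2
    rw [h2, setIntegral_congr_fun measurableSet_Ioi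
      (fun x hx => ConeAux.key α n ξ s x hs hx), integral_const_mul]
    ring
end

section
/- There is a unique bounded linear operator K on the Hilbert space L²((0,∞)×(0,2π), sin α · t dt dθ) such that for every f in this space and almost every (t,θ), Kf(t,θ) = (1/(2π)) ∫₀^{2π} ∫₀^∞ K^{Γ_α}(t,θ,t',θ') f(t',θ') sin α · t' dt' dθ', the integral converging absolutely. The spectrum of K equals ⋃_{n∈ℤ} Π_n, where for each n ∈ ℤ the set Π_n = {λ_n(ξ) : ξ ∈ ℝ} ∪ {0} with λ_n(ξ) = sin α · ∫₀^∞ t^{1+iξ} K_n^α(t,1) dt/t. Moreover, there is a constant C > 0, depending only on α, such that sup{|z| : z ∈ Π_n} ≤ C/(|n|+1) for all n ∈ ℤ. -/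
open Real

open MeasureTheory

/-- The measure `sin α · t dt dθ` on `(0,∞) × (0,2π)`. -/
noncomputable def muCone (α : ℝ) : Measure (ℝ × ℝ) :=
  (((volume.restrict (Set.Ioi (0:ℝ))).withDensity fun t => ENNReal.ofReal (sin α * t)).prod
    (volume.restrict (Set.Ioo (0:ℝ) (2 * π))))

/-- The generalized eigenvalue `λ_n(ξ) = sin α · ∫₀^∞ t^{1+iξ} K_n^α(t,1) dt/t`. -/
noncomputable def modalEigenvalue (α : ℝ) (n : ℤ) (ξ : ℝ) : ℂ :=
  ((sin α : ℝ) : ℂ) *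
    ∫ t in Set.Ioi (0:ℝ), (t : ℂ) ^ (1 + Complex.I * (ξ : ℂ)) * modalKernel α n t 1 * (t : ℂ)⁻¹

/-- The closed curve `Π_n = {λ_n(ξ) : ξ ∈ ℝ} ∪ {0}`. -/
noncomputable def modalCurve (α : ℝ) (n : ℤ) : Set ℂ :=
  {z : ℂ | ∃ ξ : ℝ, z = modalEigenvalue α n ξ} ∪ {0}


open MeasureTheory

namespace ConeAux

theorem gel1 {G : Type*} [TopologicalSpace G] [AddCommGroup G]
    [SecondCountableTopology G] [MeasurableSpace G] [BorelSpace G] (μ : Measure G)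
    {A B : Type*} [NormedCommRing A] [NormedAlgebra ℂ A] [CompleteSpace A]
    [NormedRing B] [NormedAlgebra ℂ B] [CompleteSpace B] (ι : A →ₐ[ℂ] B) (hι : Isometry ι)
    (k : G → ℂ) (hk : Integrable k μ) (TA : G → A) (KA : A)
    (hadd : ∀ g h, TA (g + h) = TA g * TA h) (h0 : TA 0 = 1) (h1 : ‖(1:A)‖ ≤ 1)
    (hnorm : ∀ g, ‖TA g‖ ≤ 1) (hcc' : Continuous fun g => ι (TA g) * ι KA)
    (hKK' : ι KA * ι KA = ∫ g, k g • (ι (TA g) * ι KA) ∂μ)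
    (z : ℂ) (hz : z ∈ spectrum ℂ (ι KA)) (hz0 : z ≠ 0) :
    ∃ c : G → ℂ, Continuous c ∧ (∀ g h, c (g + h) = c g * c h) ∧ c 0 = 1 ∧ (∀ g, ‖c g‖ ≤ 1) ∧
      z = ∫ g, k g * c g ∂μ := by
  have hnu : ¬ IsUnit (algebraMap ℂ A z - KA) := by
    intro hu
    apply hz
    have := hu.map ι
    rw [map_sub, AlgHomClass.commutes] at this
    exact this
  obtain ⟨χ, hχ⟩ := WeakDual.CharacterSpace.exists_apply_eq_zero hnu
  have hχK : χ KA = z := by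
    rw [map_sub, AlgHomClass.commutes] at hχ
    exact (sub_eq_zero.1 hχ).symm
  have hcc : Continuous fun g => TA g * KA := by
    rw [hι.isEmbedding.continuous_iff]
    refine hcc'.congr fun g => ?_
    simp
  have hχc : Continuous χ := map_continuous χ
  have hAint : Integrable (fun g => k g • (TA g * KA)) μ := by
    refine (hk.norm.mul_const ‖KA‖).mono' (hk.1.smul hcc.aestronglyMeasurable) ?_
    filter_upwards with g
    rw [norm_smul]
    refine mul_le_mul_of_nonneg_left ?_ (norm_nonneg _)
    exact (norm_mul_le _ _).trans (mul_le_of_le_one_left (norm_nonneg _) (hnorm g))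
  have hKK : KA * KA = ∫ g, k g • (TA g * KA) ∂μ := by
    apply hι.injective
    let L : A →L[ℂ] B := ⟨ι.toLinearMap, hι.continuous⟩
    have e1 := ContinuousLinearMap.integral_comp_comm L hAint
    rw [map_mul, hKK']
    refine Eq.trans ?_ e1
    refine integral_congr_ae (Filter.Eventually.of_forall fun h => ?_)
    change _ = ι _
    simp
  refine ⟨fun g => χ (TA g), ?_, ?_, ?_, ?_, ?_⟩
  · have : (fun g => χ (TA g)) = fun g => χ (TA g * KA) / z := by
      ext g
      rw [map_mul, hχK, mul_div_cancel_right₀ _ hz0]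
    rw [this]
    exact (hχc.comp hcc).div_const _
  · intro g h
    simp only [← map_mul]
    rw [← hadd]
  · simp only [h0, map_one]
  · intro g
    have h2 : ‖χ (TA g)‖ ≤ ‖TA g‖ * ‖(1 : A)‖ := by
      exact spectrum.norm_le_norm_mul_of_mem (AlgHom.apply_mem_spectrum χ (TA g))
    refine h2.trans ?_
    exact mul_le_one₀ (hnorm g) (norm_nonneg _) h1
  · have h1 : χ (KA * KA) = ∫ g, k g * (χ (TA g) * z) ∂μ := by
      have h3 := ContinuousLinearMap.integral_comp_comm (WeakDual.CharacterSpace.toCLM χ) hAint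
      rw [hKK]
      refine Eq.trans h3.symm ?_
      refine integral_congr_ae (Filter.Eventually.of_forall fun h => ?_)
      change χ (k h • (TA h * KA)) = _
      rw [map_smul, map_mul, hχK, smul_eq_mul]
    rw [map_mul, hχK] at h1
    simp_rw [← mul_assoc] at h1
    rw [integral_mul_const] at h1
    exact mul_right_cancel₀ hz0 h1

theorem tr_cont {G : Type*} [AddCommGroup G] [TopologicalSpace G] [IsTopologicalAddGroup G]
    [LocallyCompactSpace G] [SecondCountableTopology G] [T2Space G] [MeasurableSpace G] [BorelSpace G]
    (μ : Measure G) [μ.IsAddHaarMeasure] (p : ENNReal) [Fact (1 ≤ p)] (hp : p ≠ ⊤) (F : Lp ℂ p μ) :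
    Continuous fun g => Lp.compMeasurePreserving (fun y => y - g)
      (measurePreserving_sub_right μ g) F := by
  let gg : C(G, C(G, G)) := (ContinuousMap.mk (fun a : G × G => a.2 - a.1) (by fun_prop)).curry
  have h2 : ∀ g, MeasurePreserving (gg g) μ μ := fun g => measurePreserving_sub_right μ g
  exact Continuous.compMeasurePreservingLp (g := fun g => gg g) (f := fun _ => F)
    continuous_const gg.continuous h2 hp

theorem gel0 {G : Type*} [AddCommGroup G] [TopologicalSpace G] [IsTopologicalAddGroup G]
    [LocallyCompactSpace G] [SecondCountableTopology G] [T2Space G] [MeasurableSpace G] [BorelSpace G]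
    (μ : Measure G) [μ.IsAddHaarMeasure]
    {E : Type*} [NormedAddCommGroup E] [NormedSpace ℂ E] [CompleteSpace E]
    (T : G → E →L[ℂ] E) (hadd : ∀ g h, T (g + h) = T g * T h)
    (hnorm : ∀ g, ‖T g‖ ≤ 1) (hcont : ∀ v, Continuous fun g => T g v)
    (k : G → ℂ) (hk : Integrable k μ) (K : E →L[ℂ] E) (hK : ∀ v, K v = ∫ g, k g • T g v ∂μ) :
    (∀ g, T g * K = K * T g) ∧ (Continuous fun g => T g * K) := by
  have hTn : ∀ g v, ‖T g v‖ ≤ ‖v‖ := fun g v =>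
    ((T g).le_opNorm v).trans (mul_le_of_le_one_left (norm_nonneg _) (hnorm g))
  have hint : ∀ (f : G → ℂ), Integrable f μ → ∀ v, Integrable (fun g => f g • T g v) μ := by
    intro f hf v
    refine (hf.norm.mul_const ‖v‖).mono' (hf.1.smul (hcont v).aestronglyMeasurable) ?_
    filter_upwards with g
    rw [norm_smul]
    exact mul_le_mul_of_nonneg_left (hTn g v) (norm_nonneg _)
  have hTK : ∀ g, T g * K = K * T g := by
    intro g
    ext v
    change T g (K v) = K (T g v)
    rw [hK, hK, ← ContinuousLinearMap.integral_comp_comm _ (hint k hk v)]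
    refine integral_congr_ae (Filter.Eventually.of_forall fun h => ?_)
    simp only [map_smul]
    have : T g (T h v) = T h (T g v) := by
      have h1 := congrArg (fun A : E →L[ℂ] E => A v) (hadd g h)
      have h2 := congrArg (fun A : E →L[ℂ] E => A v) (hadd h g)
      rw [add_comm] at h2
      exact h1.symm.trans h2
    rw [this]
  -- norm continuity of g ↦ T g K
  have hshift : ∀ g v, T g (K v) = ∫ h, k (h - g) • T h v ∂μ := by
    intro g v
    rw [hK, ← ContinuousLinearMap.integral_comp_comm _ (hint k hk v)]
    rw [← integral_sub_right_eq_self _ g]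
    refine integral_congr_ae (Filter.Eventually.of_forall fun h => ?_)
    simp only [map_smul]
    have h1 := congrArg (fun A : E →L[ℂ] E => A v) (hadd g (h - g))
    rw [add_sub_cancel] at h1
    exact congrArg _ h1.symm
  have hnormdiff : ∀ g g', ‖T g * K - T g' * K‖ ≤ ∫ h, ‖k (h - g) - k (h - g')‖ ∂μ := by
    intro g g'
    refine ContinuousLinearMap.opNorm_le_bound _ (integral_nonneg fun _ => norm_nonneg _) fun v => ?_
    have e : (T g * K - T g' * K) v = ∫ h, (k (h - g) - k (h - g')) • T h v ∂μ := by
      change T g (K v) - T g' (K v) = _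
      rw [hshift, hshift, ← integral_sub (hint _ (hk.comp_sub_right g) v) (hint _ (hk.comp_sub_right g') v)]
      simp only [sub_smul]
    rw [e, ← integral_mul_const]
    refine norm_integral_le_of_norm_le (((hk.comp_sub_right g).sub (hk.comp_sub_right g')).norm.mul_const _) ?_
    filter_upwards with h
    rw [norm_smul]
    exact mul_le_mul_of_nonneg_left (hTn h v) (norm_nonneg _)
  have hKcont : Continuous fun g => T g * K := by
    let F : Lp ℂ 1 μ := (memLp_one_iff_integrable.2 hk).toLp k
    let S : G → Lp ℂ 1 μ := fun g => Lp.compMeasurePreserving (fun y => y - g)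
      (measurePreserving_sub_right μ g) F
    have hS : Continuous S := tr_cont μ 1 (by simp) F
    have hdist : ∀ g g', dist (T g * K) (T g' * K) ≤ dist (S g) (S g') := by
      intro g g'
      rw [dist_eq_norm, dist_eq_norm]
      refine (hnormdiff g g').trans (le_of_eq ?_)
      rw [L1.norm_eq_integral_norm]
      refine integral_congr_ae ?_
      have hF : F =ᵐ[μ] k := MemLp.coeFn_toLp _
      filter_upwards [Lp.coeFn_sub (S g) (S g'),
        Lp.coeFn_compMeasurePreserving F (measurePreserving_sub_right μ g),
        Lp.coeFn_compMeasurePreserving F (measurePreserving_sub_right μ g'),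
        (measurePreserving_sub_right μ g).quasiMeasurePreserving.ae_eq_comp hF,
        (measurePreserving_sub_right μ g').quasiMeasurePreserving.ae_eq_comp hF] with x h1 h2 h3 h4 h5
      rw [h1, Pi.sub_apply, h2, h3, h4, h5]
      rfl
    rw [continuous_iff_continuousAt]
    intro g
    rw [ContinuousAt, tendsto_iff_dist_tendsto_zero]
    exact squeeze_zero (fun _ => dist_nonneg) (fun g' => hdist g' g)
      (tendsto_iff_dist_tendsto_zero.1 (hS.tendsto g))
  exact ⟨hTK, hKcont⟩

theorem gel2 {G : Type*} [TopologicalSpace G] [AddCommGroup G]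
    [SecondCountableTopology G] [MeasurableSpace G] [BorelSpace G] (μ : Measure G)
    {B : Type*} [NormedRing B] [NormedAlgebra ℂ B] [CompleteSpace B]
    (k : G → ℂ) (hk : Integrable k μ) (T : G → B) (K : B)
    (hadd : ∀ g h, T (g + h) = T g * T h) (h0 : T 0 = 1) (h1 : ‖(1:B)‖ ≤ 1)
    (hnorm : ∀ g, ‖T g‖ ≤ 1) (hTK : ∀ g, T g * K = K * T g) (hcc : Continuous fun g => T g * K)
    (hKK : K * K = ∫ g, k g • (T g * K) ∂μ)
    (z : ℂ) (hz : z ∈ spectrum ℂ K) (hz0 : z ≠ 0) :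
    ∃ c : G → ℂ, Continuous c ∧ (∀ g h, c (g + h) = c g * c h) ∧ c 0 = 1 ∧ (∀ g, ‖c g‖ ≤ 1) ∧
      z = ∫ g, k g * c g ∂μ := by
  let s : Set B := insert K (Set.range T)
  have hscomm : ∀ a ∈ s, ∀ b ∈ s, a * b = b * a := by
    rintro a (rfl | ⟨g, rfl⟩) b (rfl | ⟨h, rfl⟩)
    · rfl
    · exact (hTK h).symm
    · exact hTK g
    · rw [← hadd, ← hadd, add_comm]
  obtain ⟨A, hAs, hAc, hAcomm⟩ : ∃ A : Subalgebra ℂ B, (∀ a ∈ s, a ∈ A) ∧ IsClosed (A : Set B) ∧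
      ∀ a b : A, a * b = b * a := by
    refine ⟨(Algebra.adjoin ℂ s).topologicalClosure, fun a ha =>
      Subalgebra.le_topologicalClosure _ (Algebra.subset_adjoin ha),
      Subalgebra.isClosed_topologicalClosure _, ?_⟩
    have := Algebra.isMulCommutative_adjoin ℂ hscomm
    exact (Subalgebra.commRingTopologicalClosure (Algebra.adjoin ℂ s) (IsMulCommutative.is_comm.comm)).mul_comm
  let _ : NormedCommRing A := { (inferInstance : NormedRing A) with mul_comm := hAcomm }
  have _ : CompleteSpace A := hAc.completeSpace_coe
  let KA : A := ⟨K, hAs K (Set.mem_insert _ _)⟩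
  let TA : G → A := fun g => ⟨T g, hAs _ (Set.mem_insert_of_mem _ ⟨g, rfl⟩)⟩
  exact gel1 μ A.val (fun _ _ => rfl) k hk TA KA (fun g h => Subtype.ext (hadd g h))
    (Subtype.ext h0) h1 hnorm hcc hKK z hz hz0

theorem gelfand_aux {G : Type*} [AddCommGroup G] [TopologicalSpace G] [IsTopologicalAddGroup G]
    [LocallyCompactSpace G] [SecondCountableTopology G] [T2Space G] [MeasurableSpace G] [BorelSpace G]
    (μ : Measure G) [μ.IsAddHaarMeasure]
    {E : Type*} [NormedAddCommGroup E] [NormedSpace ℂ E] [CompleteSpace E]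
    (T : G → E →L[ℂ] E) (hadd : ∀ g h, T (g + h) = T g * T h) (h0 : T 0 = 1)
    (hnorm : ∀ g, ‖T g‖ ≤ 1) (hcont : ∀ v, Continuous fun g => T g v)
    (k : G → ℂ) (hk : Integrable k μ) (K : E →L[ℂ] E) (hK : ∀ v, K v = ∫ g, k g • T g v ∂μ)
    (z : ℂ) (hz : z ∈ spectrum ℂ K) (hz0 : z ≠ 0) :
    ∃ c : G → ℂ, Continuous c ∧ (∀ g h, c (g + h) = c g * c h) ∧ c 0 = 1 ∧ (∀ g, ‖c g‖ ≤ 1) ∧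
      z = ∫ g, k g * c g ∂μ := by
  obtain ⟨hTK, hKcont⟩ := gel0 μ T hadd hnorm hcont k hk K hK
  have hB : Integrable (fun g => k g • (T g * K)) μ := by
    refine (hk.norm.mul_const ‖K‖).mono' (hk.1.smul hKcont.aestronglyMeasurable) ?_
    filter_upwards with g
    rw [norm_smul]
    refine mul_le_mul_of_nonneg_left ?_ (norm_nonneg _)
    exact (norm_mul_le (T g) K).trans (mul_le_of_le_one_left (norm_nonneg _) (hnorm g))
  refine gel2 μ k hk T K hadd h0 ContinuousLinearMap.norm_id_le hnorm hTK hKcont ?_ z hz hz0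
  ext v
  change K (K v) = (∫ g, k g • (T g * K) ∂μ) v
  rw [ContinuousLinearMap.integral_apply hB]
  rw [hK (K v)]
  rfl

end ConeAux

open MeasureTheory

namespace ConeAux

section
set_option linter.unusedSectionVars false
variable {G : Type*} [AddCommGroup G] [TopologicalSpace G] [IsTopologicalAddGroup G]
    [LocallyCompactSpace G] [SecondCountableTopology G] [T2Space G] [MeasurableSpace G] [BorelSpace G]
    (μ : Measure G) [μ.IsAddHaarMeasure]

noncomputable def tr (g : G) : Lp ℂ 2 μ →L[ℂ] Lp ℂ 2 μ :=
  (Lp.compMeasurePreservingₗᵢ ℂ (fun y => y - g)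
    (measurePreserving_sub_right μ g)).toContinuousLinearMap

theorem tr_coe (g : G) (F : Lp ℂ 2 μ) : tr μ g F =ᵐ[μ] fun y => F (y - g) :=
  Lp.coeFn_compMeasurePreserving F (measurePreserving_sub_right μ g)

theorem tr_norm (g : G) (F : Lp ℂ 2 μ) : ‖tr μ g F‖ = ‖F‖ :=
  LinearIsometry.norm_map _ _

theorem tr_continuous (F : Lp ℂ 2 μ) : Continuous fun g => tr μ g F :=
  tr_cont μ 2 (by simp) F

theorem tr_zero : tr μ 0 = 1 := by
  ext1 F
  refine Lp.ext ?_
  filter_upwards [tr_coe μ 0 F] with y hy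
  rw [hy, sub_zero]; rfl

theorem tr_add (g h : G) : tr μ (g + h) = tr μ g * tr μ h := by
  ext1 F
  refine Lp.ext ?_
  filter_upwards [tr_coe μ (g + h) F, tr_coe μ g (tr μ h F),
    (measurePreserving_sub_right μ g).quasiMeasurePreserving.ae_eq_comp (tr_coe μ h F)] with y h1 h2 h3
  change _ = (tr μ g (tr μ h F)) y
  rw [h1, h2]
  simp only [Function.comp] at h3
  rw [h3, sub_sub]

theorem tr_opnorm (g : G) : ‖tr μ g‖ ≤ 1 :=
  ContinuousLinearMap.opNorm_le_bound _ zero_le_one fun v => by rw [tr_norm, one_mul]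

theorem tr_int (k : G → ℂ) (hk : Integrable k μ) (F : Lp ℂ 2 μ) :
    Integrable (fun g => k g • tr μ g F) μ := by
  refine (hk.norm.mul_const ‖F‖).mono' (hk.1.smul (tr_continuous μ F).aestronglyMeasurable) ?_
  filter_upwards with g
  rw [norm_smul, tr_norm]

theorem conv_exists (k : G → ℂ) (hk : Integrable k μ) :
    ∃ K : Lp ℂ 2 μ →L[ℂ] Lp ℂ 2 μ, ∀ v, K v = ∫ g, k g • tr μ g v ∂μ := by
  refine ⟨LinearMap.mkContinuous
    { toFun := fun v => ∫ g, k g • tr μ g v ∂μ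
      map_add' := ?_
      map_smul' := ?_ } (∫ g, ‖k g‖ ∂μ) ?_, fun v => rfl⟩
  · intro v w
    simp only [map_add, smul_add]
    exact integral_add (tr_int μ k hk v) (tr_int μ k hk w)
  · intro a v
    simp only [map_smul, RingHom.id_apply]
    rw [← integral_smul]
    congr 1
    ext1 g
    rw [smul_comm]
  · intro v
    change ‖∫ g, k g • tr μ g v ∂μ‖ ≤ _
    rw [← integral_mul_const]
    refine norm_integral_le_of_norm_le (hk.norm.mul_const _) ?_
    filter_upwards with g
    rw [norm_smul, tr_norm]

theorem conv_prod_int (k : G → ℂ) (hkm : Measurable k) (hk : Integrable k μ) (F : Lp ℂ 2 μ) (s : Set G)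
    (hs : MeasurableSet s) (hμs : μ s < ⊤) :
    Integrable (fun p : G × G => k p.1 * F (p.2 - p.1)) (μ.prod (μ.restrict s)) := by
  have hFm : Measurable F := (Lp.stronglyMeasurable F).measurable
  have : IsFiniteMeasure (μ.restrict s) := ⟨by simpa using hμs⟩
  have hFi : Integrable (fun y => ‖F y‖ ^ 2) μ := (memLp_two_iff_integrable_sq_norm (Lp.aestronglyMeasurable F)).1 (Lp.memLp F)
  have hB : ∀ g, Integrable (fun y => 1 + ‖F (y - g)‖ ^ 2) (μ.restrict s) := fun g =>
    (integrable_const _).add (hFi.comp_sub_right g).restrict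
  have hle : ∀ x : ℝ, x ≤ 1 + x ^ 2 := fun x => by nlinarith [sq_nonneg (x - 1), sq_nonneg x]
  have hA : ∀ g, Integrable (fun y => F (y - g)) (μ.restrict s) := fun g => by
    refine (hB g).mono' (hFm.comp (by fun_prop)).aestronglyMeasurable ?_
    filter_upwards with y
    exact hle _
  rw [integrable_prod_iff]
  swap
  · exact (Measurable.mul (by fun_prop) (hFm.comp (by fun_prop))).aestronglyMeasurable
  refine ⟨Filter.Eventually.of_forall fun g => (hA g).const_mul (k g), ?_⟩
  set C : ℝ := (μ.restrict s).real Set.univ + ∫ y, ‖F y‖ ^ 2 ∂μ with hC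
  refine (hk.norm.mul_const C).mono' ?_ ?_
  · refine StronglyMeasurable.aestronglyMeasurable ?_
    refine StronglyMeasurable.integral_prod_right' (f := fun p : G × G => ‖k p.1 * F (p.2 - p.1)‖) ?_
    exact (Measurable.mul (by fun_prop) (hFm.comp (by fun_prop))).norm.stronglyMeasurable
  · filter_upwards with g
    rw [Real.norm_of_nonneg (integral_nonneg fun _ => norm_nonneg _)]
    simp only [norm_mul]
    rw [integral_const_mul]
    refine mul_le_mul_of_nonneg_left ?_ (norm_nonneg _)
    calc ∫ y in s, ‖F (y - g)‖ ∂μ ≤ ∫ y in s, (1 + ‖F (y - g)‖ ^ 2) ∂μ :=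
          integral_mono (hA g).norm (hB g) fun y => hle _
      _ = (μ.restrict s).real Set.univ + ∫ y in s, ‖F (y - g)‖ ^ 2 ∂μ := by
          rw [integral_add (integrable_const _) (hFi.comp_sub_right g).restrict]
          simp
      _ ≤ C := by
          rw [hC]
          gcongr
          rw [← integral_sub_right_eq_self (fun y => ‖F y‖ ^ 2) g]
          exact setIntegral_le_integral (hFi.comp_sub_right g) (Filter.Eventually.of_forall fun _ => by positivity)

theorem conv_ae (k : G → ℂ) (hkm : Measurable k) (hk : Integrable k μ) (K : Lp ℂ 2 μ →L[ℂ] Lp ℂ 2 μ)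
    (hK : ∀ v, K v = ∫ g, k g • tr μ g v ∂μ) (F : Lp ℂ 2 μ) :
    ∀ᵐ y ∂μ, Integrable (fun g => k (y - g) * F g) μ ∧ K F y = ∫ g, k (y - g) * F g ∂μ := by
  have h1 : ∀ᵐ y ∂μ, Integrable (fun g => k g * F (y - g)) μ := by
    refine ae_of_forall_measure_lt_top_ae_restrict _ fun s hs hμs => ?_
    exact (conv_prod_int μ k hkm hk F s hs hμs).prod_left_ae
  have h2 : (K F : G → ℂ) =ᵐ[μ] fun y => ∫ g, k g * F (y - g) ∂μ := by
    refine ae_eq_of_forall_setIntegral_eq_of_sigmaFinite ?_ ?_ ?_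
    · intro s hs hμs
      exact integrableOn_Lp_of_measure_ne_top _ (by norm_num) hμs.ne
    · intro s hs hμs
      exact (conv_prod_int μ k hkm hk F s hs hμs).integral_prod_right
    · intro s hs hμs
      have e0 := integral_integral_swap (f := fun g y => k g * F (y - g)) (conv_prod_int μ k hkm hk F s hs hμs)
      rw [← e0]
      rw [← L2.inner_indicatorConstLp_one (𝕜 := ℂ) hs hμs.ne, hK]
      have e1 := ContinuousLinearMap.integral_comp_comm (innerSL ℂ (indicatorConstLp 2 hs hμs.ne (1:ℂ))) (tr_int μ k hk F)
      refine e1.symm.trans ?_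
      refine integral_congr_ae (Filter.Eventually.of_forall fun g => ?_)
      simp only [map_smul, smul_eq_mul]
      rw [integral_const_mul]
      congr 1
      refine (L2.inner_indicatorConstLp_one (𝕜 := ℂ) hs hμs.ne _).trans ?_
      exact integral_congr_ae (ae_restrict_of_ae (tr_coe μ g F))
  filter_upwards [h1, h2] with y hy1 hy2
  have e : ∀ g, k (y - g) * F g = (fun g => k g * F (y - g)) (y - g) := fun g => by simp
  simp_rw [e]
  exact ⟨hy1.comp_sub_left y, hy2.trans (integral_sub_left_eq_self (fun g => k g * F (y - g)) μ y).symm⟩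

theorem conv_approx (k : G → ℂ) (hk : Integrable k μ) (K : Lp ℂ 2 μ →L[ℂ] Lp ℂ 2 μ)
    (hK : ∀ v, K v = ∫ g, k g • tr μ g v ∂μ) (c : G → ℂ) (hc : Continuous c)
    (hadd : ∀ g h, c (g + h) = c g * c h) (hc1 : ∀ g, ‖c g‖ = 1)
    (N : G → ℝ) (hN : Continuous N) (hNs : ∀ x g, |N (x - g) - N x| ≤ N g)
    (hNi : ∀ ε > 0, Integrable (fun x => Real.exp (-ε * N x)) μ) :
    (∫ g, k g * c (-g) ∂μ) ∈ spectrum ℂ K := by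
  set z := ∫ g, k g * c (-g) ∂μ with hz
  have hkc : Integrable (fun g => k g * c (-g)) μ := by
    refine hk.norm.mono' (hk.1.mul (by fun_prop : Continuous fun g => c (-g)).aestronglyMeasurable) ?_
    filter_upwards with g
    simp [hc1]
  have hNnn : ∀ g, 0 ≤ N g := fun g => (abs_nonneg _).trans (hNs 0 g)
  let f : ℝ → G → ℂ := fun ε x => c x * (Real.exp (-ε * N x) : ℂ)
  have hfn : ∀ ε x, ‖f ε x‖ = Real.exp (-ε * N x) := fun ε x => by
    simp only [f, norm_mul, hc1, one_mul, Complex.norm_real, Real.norm_eq_abs, Real.abs_exp]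
  have hfc : ∀ ε, Continuous (f ε) := fun ε => by
    simp only [f]; fun_prop
  have hfm : ∀ ε > 0, MemLp (f ε) 2 μ := by
    intro ε hε
    rw [memLp_two_iff_integrable_sq_norm (hfc ε).aestronglyMeasurable]
    refine (hNi (2 * ε) (by positivity)).congr (Filter.Eventually.of_forall fun x => ?_)
    simp only [hfn]
    rw [← Real.exp_nat_mul]
    congr 1; push_cast; ring
  let w : ℝ → G → ℝ := fun ε g => min 2 (Real.exp (ε * N g) - 1)
  -- main estimate
  have hmain : ∀ ε (hε : 0 < ε), ∀ g, ‖tr μ g ((hfm ε hε).toLp) - c (-g) • (hfm ε hε).toLp‖ ≤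
      w ε g * ‖(hfm ε hε).toLp‖ := by
    intro ε hε g
    rw [min_mul_of_nonneg _ _ (norm_nonneg _)]
    refine le_min ?_ ?_
    · refine (norm_sub_le _ _).trans ?_
      rw [tr_norm, norm_smul, hc1]; linarith
    · refine Lp.norm_le_mul_norm_of_ae_le_mul ?_
      filter_upwards [Lp.coeFn_sub (tr μ g ((hfm ε hε).toLp)) (c (-g) • (hfm ε hε).toLp),
        tr_coe μ g ((hfm ε hε).toLp), Lp.coeFn_smul (c (-g)) ((hfm ε hε).toLp), (hfm ε hε).coeFn_toLp,
        (measurePreserving_sub_right μ g).quasiMeasurePreserving.ae_eq_comp (hfm ε hε).coeFn_toLp]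
        with x h1 h2 h3 h4 h5
      simp only [Function.comp] at h5
      rw [h1, Pi.sub_apply, h2, h3, Pi.smul_apply, h4, h5, hfn]
      have e : f ε (x - g) - c (-g) • f ε x =
          (c (-g) * c x) * ((Real.exp (-ε * N (x - g)) - Real.exp (-ε * N x) : ℝ) : ℂ) := by
        simp only [f, smul_eq_mul]
        rw [sub_eq_add_neg x g, hadd]; push_cast; ring
      rw [e, norm_mul, norm_mul, hc1, hc1, Complex.norm_real, Real.norm_eq_abs, one_mul, one_mul]
      have h6 := abs_le.1 (hNs x g)
      have e2 : Real.exp (-ε * N (x - g)) = Real.exp (-ε * (N (x - g) - N x)) * Real.exp (-ε * N x) := by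
        rw [← Real.exp_add]; congr 1; ring
      rw [e2, ← sub_one_mul, abs_mul, Real.abs_exp]
      refine mul_le_mul_of_nonneg_right ?_ (Real.exp_pos _).le
      set d := N (x - g) - N x
      have h7 : Real.exp (-ε * d) ≤ Real.exp (ε * N g) := Real.exp_le_exp.2 (by nlinarith)
      have h8 : Real.exp (-(ε * N g)) ≤ Real.exp (-ε * d) := Real.exp_le_exp.2 (by nlinarith)
      have h9 : Real.exp (ε * N g) * Real.exp (-(ε * N g)) = 1 := by rw [← Real.exp_add]; simp
      have h10 : 1 ≤ Real.exp (ε * N g) := Real.one_le_exp (mul_nonneg hε.le (hNnn g))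
      rw [abs_le]
      constructor
      · nlinarith [sq_nonneg (Real.exp (ε * N g) - 1)]
      · linarith
  have hw0 : ∀ ε ≥ 0, ∀ g, 0 ≤ w ε g := fun ε hε g =>
    le_min (by norm_num) (sub_nonneg.2 (Real.one_le_exp (mul_nonneg hε (hNnn g))))
  have hwi : ∀ ε ≥ 0, Integrable (fun g => ‖k g‖ * w ε g) μ := by
    intro ε hε
    refine (hk.norm.mul_const 2).mono' (hk.1.norm.mul (by simp only [w]; fun_prop : Continuous (w ε)).aestronglyMeasurable) ?_
    filter_upwards with g
    rw [norm_mul, norm_norm, Real.norm_of_nonneg (hw0 ε hε g)]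
    exact mul_le_mul_of_nonneg_left (min_le_left _ _) (norm_nonneg _)
  have hest : ∀ ε (hε : 0 < ε), ‖K ((hfm ε hε).toLp) - z • (hfm ε hε).toLp‖ ≤
      (∫ g, ‖k g‖ * w ε g ∂μ) * ‖(hfm ε hε).toLp‖ := by
    intro ε hε
    have e : K ((hfm ε hε).toLp) - z • (hfm ε hε).toLp =
        ∫ g, k g • (tr μ g ((hfm ε hε).toLp) - c (-g) • (hfm ε hε).toLp) ∂μ := by
      rw [hK, hz, ← integral_smul_const, ← integral_sub (tr_int μ k hk _) (hkc.smul_const _)]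
      simp only [smul_sub, smul_smul]
    rw [e, ← integral_mul_const]
    refine norm_integral_le_of_norm_le ((hwi ε hε.le).mul_const _) ?_
    filter_upwards with g
    rw [norm_smul, mul_assoc]
    exact mul_le_mul_of_nonneg_left (hmain ε hε g) (norm_nonneg _)
  have hlim : Filter.Tendsto (fun n : ℕ => ∫ g, ‖k g‖ * w (1 / ((n : ℝ) + 1)) g ∂μ) Filter.atTop (nhds 0) := by
    have : (0:ℝ) = ∫ g, ‖k g‖ * w 0 g ∂μ := by simp [w]
    rw [this]
    refine tendsto_integral_of_dominated_convergence (fun g => ‖k g‖ * 2)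
      (fun n => (hwi _ (by positivity)).1) (hk.norm.mul_const 2) ?_ ?_
    · intro n
      filter_upwards with g
      rw [norm_mul, norm_norm, Real.norm_of_nonneg (hw0 _ (by positivity) g)]
      exact mul_le_mul_of_nonneg_left (min_le_left _ _) (norm_nonneg _)
    · filter_upwards with g
      refine Filter.Tendsto.const_mul _ ?_
      have hcont : Continuous fun ε => w ε g := by simp only [w]; fun_prop
      exact (hcont.tendsto 0).comp tendsto_one_div_add_atTop_nhds_zero_nat
  intro hu
  obtain ⟨u, hu⟩ : IsUnit (algebraMap ℂ (Lp ℂ 2 μ →L[ℂ] Lp ℂ 2 μ) z - K) := hu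
  set B : Lp ℂ 2 μ →L[ℂ] Lp ℂ 2 μ := ↑u⁻¹
  have hB : ∀ v, ‖v‖ ≤ ‖B‖ * ‖K v - z • v‖ := by
    intro v
    have h1 : B ((algebraMap ℂ (Lp ℂ 2 μ →L[ℂ] Lp ℂ 2 μ) z - K) v) = v := by
      rw [← hu]
      exact congrArg (fun A : Lp ℂ 2 μ →L[ℂ] Lp ℂ 2 μ => A v) u.inv_mul
    have h2 : (algebraMap ℂ (Lp ℂ 2 μ →L[ℂ] Lp ℂ 2 μ) z - K) v = z • v - K v := by
      simp [Algebra.algebraMap_eq_smul_one]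
    rw [h2] at h1
    rw [norm_sub_rev]
    conv_lhs => rw [← h1]
    exact B.le_opNorm _
  have hlim2 := hlim.const_mul ‖B‖
  rw [mul_zero] at hlim2
  obtain ⟨n, hn⟩ := ((tendsto_order.1 hlim2).2 1 one_pos).exists
  have hε : (0:ℝ) < 1 / ((n : ℝ) + 1) := by positivity
  have h1 := (hB ((hfm _ hε).toLp)).trans (mul_le_mul_of_nonneg_left (hest _ hε) (norm_nonneg _))
  have hpos : 0 < ‖(hfm _ hε).toLp‖ := by
    rw [norm_pos_iff]
    intro h0
    have h2 : f (1 / ((n : ℝ) + 1)) =ᵐ[μ] 0 := (MemLp.toLp_eq_toLp_iff (hfm _ hε) MemLp.zero').1 (by rw [h0]; rfl)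
    obtain ⟨x, hx⟩ := h2.exists
    have := hfn (1 / ((n : ℝ) + 1)) x
    rw [hx] at this
    simp at this
    exact absurd this.symm (Real.exp_pos _).ne'
  rw [← mul_assoc] at h1
  nlinarith
end
end ConeAux

open MeasureTheory

namespace ConeAux

theorem char_real (c : ℝ → ℂ) (hc : Continuous c) (hadd : ∀ x y, c (x + y) = c x * c y)
    (h0 : c 0 = 1) (hn : ∀ x, ‖c x‖ ≤ 1) : ∃ ξ : ℝ, ∀ x : ℝ, c x = Complex.exp (Complex.I * ξ * x) := by
  let C : ℝ → ℂ := fun x => ∫ t in (0:ℝ)..x, c t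
  have hC : ∀ x, HasDerivAt C (c x) x := fun x =>
    intervalIntegral.integral_hasDerivAt_right (hc.intervalIntegrable _ _)
      (hc.stronglyMeasurableAtFilter _ _) hc.continuousAt
  obtain ⟨a, ha⟩ : ∃ a, C a ≠ 0 := by
    by_contra! h
    have h1 : C = fun _ => 0 := funext h
    have h2 := hC 0
    rw [h1] at h2
    have := h2.unique (hasDerivAt_const (0:ℝ) (0:ℂ))
    rw [h0] at this
    exact one_ne_zero this
  have hcC : ∀ x, c x = (C (x + a) - C x) / C a := by
    intro x
    rw [eq_div_iff ha]
    simp only [C]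
    rw [intervalIntegral.integral_interval_sub_left (hc.intervalIntegrable _ _) (hc.intervalIntegrable _ _),
      ← intervalIntegral.integral_const_mul]
    have := intervalIntegral.integral_comp_add_left (a := 0) (b := a) c x
    rw [add_zero] at this
    rw [← this]
    simp only [hadd]
  set κ : ℂ := (c a - 1) / C a with hκ
  have hcd : ∀ x, HasDerivAt c (κ * c x) x := by
    intro x
    have h1 : HasDerivAt (fun x => (C (x + a) - C x) / C a) ((c (x + a) - c x) / C a) x :=
      (((hC (x + a)).comp_add_const x a).sub (hC x)).div_const _
    have e : (fun x => (C (x + a) - C x) / C a) = c := funext fun x => (hcC x).symm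
    rw [e] at h1
    convert h1 using 1
    rw [hadd, hκ]; ring
  have hexp : ∀ x : ℝ, c x = Complex.exp (κ * x) := by
    let D : ℝ → ℂ := fun x => c x * Complex.exp (-(κ * x))
    have hD : ∀ x, HasDerivAt D 0 x := by
      intro x
      have h1 : HasDerivAt (fun x : ℝ => Complex.exp (-(κ * x))) (Complex.exp (-(κ * x)) * (-(κ * 1))) x :=
        (((Complex.ofRealCLM.hasDerivAt (x := x)).const_mul κ).neg).cexp
      refine ((hcd x).mul h1).congr_deriv ?_
      ring
    have h2 := is_const_of_deriv_eq_zero (fun x => (hD x).differentiableAt) (fun x => (hD x).deriv)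
    intro x
    have h3 := h2 x 0
    simp only [D, h0] at h3
    simp only [Complex.ofReal_zero, mul_zero, neg_zero, Complex.exp_zero, mul_one] at h3
    rw [Complex.exp_neg, mul_inv_eq_one₀ (Complex.exp_ne_zero _)] at h3
    exact h3
  have hre : κ.re = 0 := by
    have h1 := hn 1
    have h2 := hn (-1)
    rw [hexp, Complex.norm_exp] at h1 h2
    simp at h1 h2
    linarith
  refine ⟨κ.im, fun x => ?_⟩
  rw [hexp]
  congr 2
  apply Complex.ext <;> simp [hre]

abbrev GG := ℝ × AddCircle (2 * Real.pi)

instance factTwoPi : Fact (0 < 2 * Real.pi) := ⟨Real.two_pi_pos⟩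

theorem char_GG (c : GG → ℂ) (hc : Continuous c) (hadd : ∀ x y, c (x + y) = c x * c y)
    (h0 : c 0 = 1) (hn : ∀ x, ‖c x‖ ≤ 1) : ∃ (ξ : ℝ) (n : ℤ), ∀ x θ : ℝ,
    c (x, (θ : AddCircle (2 * Real.pi))) = Complex.exp (Complex.I * ξ * x) * Complex.exp (Complex.I * n * θ) := by
  obtain ⟨ξ, h1⟩ := char_real (fun x => c (x, 0)) (by fun_prop) (fun x y => by
    rw [← hadd]; simp) h0 (fun x => hn _)
  have hq : Continuous fun θ : ℝ => (θ : AddCircle (2 * Real.pi)) := AddCircle.continuous_mk' _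
  obtain ⟨η, h2⟩ := char_real (fun θ => c (0, (θ : AddCircle (2 * Real.pi)))) (by fun_prop) (fun x y => by
    rw [← hadd]; simp) h0 (fun x => hn _)
  have h3 := h2 (2 * Real.pi)
  rw [AddCircle.coe_period] at h3
  have h4 : c (0, 0) = 1 := h0
  rw [h4] at h3
  obtain ⟨n, h5⟩ := Complex.exp_eq_one_iff.1 h3.symm
  have h6 : (η : ℂ) = n := by
    have h7 : (2 * Real.pi * Complex.I : ℂ) ≠ 0 := Complex.two_pi_I_ne_zero
    apply mul_right_cancel₀ h7
    rw [← h5]; push_cast; ring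
  refine ⟨ξ, n, fun x θ => ?_⟩
  have := hadd (x, 0) (0, (θ : AddCircle (2 * Real.pi)))
  rw [Prod.mk_add_mk, add_zero, zero_add] at this
  rw [this, ← h6, ← h1, ← h2]

noncomputable def chr (ξ : ℝ) (n : ℤ) : GG → ℂ := fun g =>
  Complex.exp (Complex.I * ξ * g.1) * fourier n g.2

theorem chr_apply (ξ : ℝ) (n : ℤ) (x θ : ℝ) : chr ξ n (x, (θ : AddCircle (2 * Real.pi))) =
    Complex.exp (Complex.I * ξ * x) * Complex.exp (Complex.I * n * θ) := by
  simp only [chr, fourier_coe_apply]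
  congr 2
  have : (Real.pi : ℂ) ≠ 0 := by exact_mod_cast Real.pi_ne_zero
  push_cast
  field_simp

theorem chr_cont (ξ : ℝ) (n : ℤ) : Continuous (chr ξ n) := by
  unfold chr; fun_prop

theorem chr_norm (ξ : ℝ) (n : ℤ) (g : GG) : ‖chr ξ n g‖ = 1 := by
  rw [chr, norm_mul, Complex.norm_exp]
  have : ‖fourier n g.2‖ = 1 := by rw [fourier_apply]; exact Circle.norm_coe _
  rw [this]; simp

theorem chr_add (ξ : ℝ) (n : ℤ) (g h : GG) : chr ξ n (g + h) = chr ξ n g * chr ξ n h := by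
  simp only [chr, Prod.fst_add, Prod.snd_add, fourier_apply, smul_add, AddCircle.toCircle_add,
    Circle.coe_mul, Complex.ofReal_add, mul_add, Complex.exp_add]
  ring

theorem weight_int (ε : ℝ) (hε : 0 < ε) : Integrable (fun x : GG => Real.exp (-ε * |x.1|)) := by
  have h1 : Integrable (fun x : ℝ => Real.exp (-ε * |x|)) := by
    rw [← integrableOn_univ, ← Set.Iic_union_Ioi (a := (0:ℝ))]
    refine IntegrableOn.union ?_ ?_
    · refine (integrableOn_exp_mul_Iic hε 0).congr_fun (fun x hx => ?_) measurableSet_Iic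
      simp only [abs_of_nonpos (Set.mem_Iic.1 hx)]; congr 1; ring
    · refine (integrableOn_exp_mul_Ioi (neg_lt_zero.2 hε) 0).congr_fun (fun x hx => ?_) measurableSet_Ioi
      simp only [abs_of_pos (Set.mem_Ioi.1 hx)]
  have := h1.mul_prod (integrable_const (1:ℝ) (μ := (volume : Measure (AddCircle (2 * Real.pi)))))
  simp only [mul_one] at this
  exact this
end ConeAux

open MeasureTheory

namespace ConeAux

noncomputable def Jc : ℝ := ∫ x : ℝ, (1 + ‖x‖ ^ 2) ^ (-(3:ℝ) / 2)

theorem Jc_nonneg : 0 ≤ Jc := integral_nonneg fun x => by positivity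

theorem lint_shift (a D : ℝ) (hD : 0 < D) :
    ∫⁻ t : ℝ, ENNReal.ofReal (((t - a) ^ 2 + D) ^ (-(3:ℝ) / 2)) = ENNReal.ofReal (Jc / D) := by
  have hI : Integrable (fun x : ℝ => (1 + ‖x‖ ^ 2) ^ (-(3:ℝ) / 2)) :=
    integrable_rpow_neg_one_add_norm_sq (by simp)
  have hs : 0 < √D := Real.sqrt_pos.2 hD
  have e : ∀ t, ((t - a) ^ 2 + D) ^ (-(3:ℝ) / 2) =
      D ^ (-(3:ℝ) / 2) * (1 + ‖(t - a) / √D‖ ^ 2) ^ (-(3:ℝ) / 2) := by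
    intro t
    rw [← Real.mul_rpow hD.le (by positivity)]
    congr 1
    rw [Real.norm_eq_abs, sq_abs, div_pow, Real.sq_sqrt hD.le]
    field_simp
    ring
  have hI2 : Integrable (fun t : ℝ => (1 + ‖(t - a) / √D‖ ^ 2) ^ (-(3:ℝ) / 2)) :=
    (hI.comp_div hs.ne').comp_sub_right a
  simp_rw [e]
  rw [← ofReal_integral_eq_lintegral_ofReal (hI2.const_mul _) (Filter.Eventually.of_forall fun t => by positivity)]
  congr 1
  rw [integral_const_mul, integral_sub_right_eq_self (fun t : ℝ => (1 + ‖t / √D‖ ^ 2) ^ (-(3:ℝ) / 2)) a,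
    Measure.integral_comp_div (fun x : ℝ => (1 + ‖x‖ ^ 2) ^ (-(3:ℝ) / 2)) (√D)]
  rw [abs_of_pos hs, smul_eq_mul, ← mul_assoc, ← Jc, Real.sqrt_eq_rpow, ← Real.rpow_add hD]
  norm_num
  rw [Real.rpow_neg_one]; field_simp

theorem lint_Q (b v : ℝ) (hb : 0 < b) (hb1 : b ≤ 1) (hv : 0 < v) (hv1 : v ≤ 1) :
    ∫⁻ t in Set.Ioi (0:ℝ), ENNReal.ofReal (((t - 1) ^ 2 + 2 * b * t * v) ^ (-(3:ℝ) / 2))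
      ≤ ENNReal.ofReal (Jc / (b * v)) := by
  have hD : 0 < b * v := by positivity
  have hbv : b * v ≤ 1 := by nlinarith
  rw [← lint_shift (1 - b * v) (b * v) hD]
  refine (lintegral_mono fun t => ?_).trans (setLIntegral_le_lintegral _ _)
  refine ENNReal.ofReal_le_ofReal ?_
  refine Real.rpow_le_rpow_of_nonpos (by positivity) ?_ (by norm_num)
  nlinarith

noncomputable def kf (b t θ : ℝ) : ℝ :=
  (1 - Real.cos θ) * ((t - 1) ^ 2 + 2 * b * t * (1 - Real.cos θ)) ^ (-(3:ℝ) / 2)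

theorem kf_meas (b : ℝ) : Measurable (fun p : ℝ × ℝ => kf b p.1 p.2) := by
  unfold kf; fun_prop

theorem kf_nonneg (b t θ : ℝ) (hb : 0 ≤ b) (ht : 0 ≤ t) : 0 ≤ kf b t θ := by
  have := Real.cos_le_one θ
  have : 0 ≤ 1 - Real.cos θ := by linarith
  unfold kf; positivity

theorem lint_kf (b θ : ℝ) (hb : 0 < b) (hb1 : b ≤ 1) :
    ∫⁻ t in Set.Ioi (0:ℝ), ‖kf b t θ‖ₑ ≤ ENNReal.ofReal (2 * Jc / b) := by
  have h0 := Real.cos_le_one θ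
  have h1 := Real.neg_one_le_cos θ
  rcases eq_or_lt_of_le h0 with h | h
  · simp [kf, h]
  have hw : 0 < 1 - Real.cos θ := by linarith
  set w := 1 - Real.cos θ with hwd
  have hw2 : w ≤ 2 := by linarith
  calc ∫⁻ t in Set.Ioi (0:ℝ), ‖kf b t θ‖ₑ
      ≤ ∫⁻ t in Set.Ioi (0:ℝ), ENNReal.ofReal w * ENNReal.ofReal (((t - 1) ^ 2 + 2 * b * t * (w / 2)) ^ (-(3:ℝ) / 2)) := by
        refine setLIntegral_mono' measurableSet_Ioi fun t ht => ?_
        have ht : 0 < t := ht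
        rw [Real.enorm_of_nonneg (kf_nonneg b t θ hb.le ht.le), ← ENNReal.ofReal_mul hw.le]
        refine ENNReal.ofReal_le_ofReal ?_
        unfold kf
        refine mul_le_mul_of_nonneg_left ?_ hw.le
        refine Real.rpow_le_rpow_of_nonpos (by positivity) ?_ (by norm_num)
        have : 0 < b * t * w := by positivity
        nlinarith
    _ = ENNReal.ofReal w * ∫⁻ t in Set.Ioi (0:ℝ), ENNReal.ofReal (((t - 1) ^ 2 + 2 * b * t * (w / 2)) ^ (-(3:ℝ) / 2)) := by
        rw [lintegral_const_mul']; simp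
    _ ≤ ENNReal.ofReal w * ENNReal.ofReal (Jc / (b * (w / 2))) := by
        gcongr
        exact lint_Q b (w / 2) hb hb1 (by positivity) (by linarith)
    _ = ENNReal.ofReal (2 * Jc / b) := by
        rw [← ENNReal.ofReal_mul hw.le]
        congr 1
        field_simp

theorem second_diff (f f' f'' : ℝ → ℝ) (x h M : ℝ) (hh : 0 ≤ h)
    (hf : ∀ y, |y - x| ≤ h → HasDerivAt f (f' y) y)
    (hf' : ∀ y, |y - x| ≤ h → HasDerivAt f' (f'' y) y)
    (hM : ∀ y, |y - x| ≤ h → |f'' y| ≤ M) : |2 * f x - f (x + h) - f (x - h)| ≤ 2 * M * h ^ 2 := by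
  have hM0 : 0 ≤ M := (abs_nonneg _).trans (hM x (by simpa using hh))
  have h1 : ∀ s ∈ Set.Icc 0 h, |f' (x + s) - f' (x - s)| ≤ 2 * M * h := by
    intro s hs
    have := Convex.norm_image_sub_le_of_norm_hasDerivWithin_le (f := f') (f' := f'') (C := M)
      (s := Set.Icc (x - h) (x + h)) (x := x - s) (y := x + s)
      (fun y hy => (hf' y (abs_le.2 ⟨by linarith [hy.1], by linarith [hy.2]⟩)).hasDerivWithinAt)
      (fun y hy => hM y (abs_le.2 ⟨by linarith [hy.1], by linarith [hy.2]⟩)) (convex_Icc _ _)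
      ⟨by linarith [hs.2], by linarith [hs.1]⟩ ⟨by linarith [hs.1], by linarith [hs.2]⟩
    rw [Real.norm_eq_abs, Real.norm_eq_abs] at this
    refine this.trans ?_
    have e : x + s - (x - s) = 2 * s := by ring
    rw [e, abs_of_nonneg (by linarith [hs.1])]
    nlinarith [hs.2]
  have h2 := Convex.norm_image_sub_le_of_norm_hasDerivWithin_le (f := fun s => f (x + s) + f (x - s))
    (f' := fun s => f' (x + s) - f' (x - s)) (C := 2 * M * h) (s := Set.Icc 0 h) (x := 0) (y := h)
    (fun s hs => by
      have a1 : HasDerivAt (fun s => f (x + s)) (f' (x + s)) s :=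
        (hf (x + s) (by rw [add_sub_cancel_left, abs_of_nonneg hs.1]; exact hs.2)).comp_const_add x s
      have a2 : HasDerivAt (fun s => f (x - s)) (-f' (x - s)) s :=
        (hf (x - s) (by rw [sub_sub_cancel_left, abs_neg, abs_of_nonneg hs.1]; exact hs.2)).comp_const_sub x s
      exact ((a1.add a2).congr_deriv (by ring)).hasDerivWithinAt)
    h1 (convex_Icc _ _) ⟨le_rfl, hh⟩ ⟨hh, le_rfl⟩
  simp only [Real.norm_eq_abs, add_zero, sub_zero, abs_of_nonneg hh] at h2
  rw [abs_sub_comm] at h2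
  calc _ = |f x + f x - (f (x + h) + f (x - h))| := by congr 1; ring
    _ ≤ _ := h2
    _ = _ := by ring

theorem kf_second_diff (A B m x h : ℝ) (hA : 0 ≤ A) (hB : 0 ≤ B) (hh : 0 ≤ h) (hm : 0 < m)
    (hq : ∀ y, |y - x| ≤ h → m ≤ A + B * (1 - Real.cos y)) :
    let f : ℝ → ℝ := fun y => (1 - Real.cos y) * (A + B * (1 - Real.cos y)) ^ (-(3:ℝ) / 2)
    |2 * f x - f (x + h) - f (x - h)| ≤ 2 * (16 * m ^ (-(3:ℝ) / 2)) * h ^ 2 := by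
  intro f
  let q : ℝ → ℝ := fun y => A + B * (1 - Real.cos y)
  let f' : ℝ → ℝ := fun y => Real.sin y * q y ^ (-(3:ℝ) / 2) -
    3 / 2 * B * ((1 - Real.cos y) * Real.sin y) * q y ^ (-(5:ℝ) / 2)
  let f'' : ℝ → ℝ := fun y => Real.cos y * q y ^ (-(3:ℝ) / 2)
    - 3 / 2 * B * Real.sin y ^ 2 * q y ^ (-(5:ℝ) / 2)
    - 3 / 2 * B * (Real.sin y ^ 2 + (1 - Real.cos y) * Real.cos y) * q y ^ (-(5:ℝ) / 2)
    + 15 / 4 * B ^ 2 * (1 - Real.cos y) * Real.sin y ^ 2 * q y ^ (-(7:ℝ) / 2)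
  have hw : ∀ y, HasDerivAt (fun y => 1 - Real.cos y) (Real.sin y) y := fun y =>
    ((Real.hasDerivAt_cos y).const_sub 1).congr_deriv (by ring)
  have hqd : ∀ y, HasDerivAt q (B * Real.sin y) y := fun y =>
    ((hw y).const_mul B).const_add A
  have hqp : ∀ y, |y - x| ≤ h → 0 < q y := fun y hy => hm.trans_le (hq y hy)
  have hp : ∀ (p : ℝ) y, |y - x| ≤ h → HasDerivAt (fun y => q y ^ p) (B * Real.sin y * p * q y ^ (p - 1)) y :=
    fun p y hy => (hqd y).rpow_const (Or.inl (hqp y hy).ne')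
  refine second_diff f f' f'' x h _ hh ?_ ?_ ?_
  · intro y hy
    refine ((hw y).mul (hp (-(3:ℝ) / 2) y hy)).congr_deriv ?_
    have e : (-(3:ℝ) / 2 - 1) = -(5:ℝ) / 2 := by norm_num
    simp only [f', e]
    ring
  · intro y hy
    have e1 : (-(3:ℝ) / 2 - 1) = -(5:ℝ) / 2 := by norm_num
    have e2 : (-(5:ℝ) / 2 - 1) = -(7:ℝ) / 2 := by norm_num
    have d1 := (Real.hasDerivAt_sin y).mul (hp (-(3:ℝ) / 2) y hy)
    have d2 := ((((hw y).mul (Real.hasDerivAt_sin y)).const_mul (3 / 2 * B))).mul (hp (-(5:ℝ) / 2) y hy)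
    refine (d1.sub d2).congr_deriv ?_
    simp only [f'', e1, e2, Pi.mul_apply]
    ring
  · intro y hy
    have hqy := hqp y hy
    have r1 : q y ^ (-(5:ℝ) / 2) = q y ^ (-(3:ℝ) / 2) / q y := by
      rw [← Real.rpow_sub_one hqy.ne']; norm_num
    have r2 : q y ^ (-(7:ℝ) / 2) = q y ^ (-(3:ℝ) / 2) / q y ^ 2 := by
      rw [← Real.rpow_natCast, ← Real.rpow_sub hqy]; norm_num
    have hc1 := Real.cos_le_one y
    have hc2 := Real.neg_one_le_cos y
    have hmono : q y ^ (-(3:ℝ) / 2) ≤ m ^ (-(3:ℝ) / 2) :=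
      Real.rpow_le_rpow_of_nonpos hm (hq y hy) (by norm_num)
    set R := q y ^ (-(3:ℝ) / 2) with hR
    have hRp : 0 ≤ R := Real.rpow_nonneg hqy.le _
    set c := Real.cos y with hc
    have hs2 : Real.sin y ^ 2 = (1 - c) * (1 + c) := by
      rw [Real.sin_sq]; ring
    set u := B * (1 - c) / q y with hu
    have hu0 : 0 ≤ u := div_nonneg (mul_nonneg hB (by linarith)) hqy.le
    have hu1 : u ≤ 1 := by
      rw [hu, div_le_one hqy]
      simp only [q]; linarith
    have e : f'' y = R * (c - 3 / 2 * u * (1 + c) - 3 / 2 * u * (1 + c + c) + 15 / 4 * u ^ 2 * (1 + c)) := by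
      simp only [f'']
      rw [r1, r2, hs2, hu, ← hR, ← hc]
      field_simp
    rw [e, abs_mul, abs_of_nonneg hRp, mul_comm]
    refine mul_le_mul ?_ hmono hRp (by norm_num)
    rw [abs_le]
    constructor <;> nlinarith [mul_nonneg hu0 (sub_nonneg.2 hu1), mul_nonneg hu0 (by linarith : 0 ≤ 1 + c), mul_nonneg hu0 (by linarith : 0 ≤ 1 - c), mul_nonneg (mul_nonneg hu0 hu0) (by linarith : 0 ≤ 1 + c),mul_nonneg (mul_nonneg hu0 hu0) (by linarith : 0 ≤ 1 - c)]

end ConeAux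

open MeasureTheory

namespace ConeAux

noncomputable def Dk (b h t θ : ℝ) : ℝ := 2 * kf b t θ - kf b t (θ + h) - kf b t (θ - h)

theorem Dk_meas (b h : ℝ) : Measurable (fun p : ℝ × ℝ => Dk b h p.1 p.2) := by
  unfold Dk kf; fun_prop

theorem cos_low (θ h y : ℝ) (hθ : |θ| ≤ Real.pi) (h2 : 2 * h ≤ |θ|) (hy : |y - θ| ≤ h) :
    θ ^ 2 / (2 * Real.pi ^ 2) ≤ 1 - Real.cos y := by
  have hp := Real.pi_pos
  have a1 : |θ| / 2 ≤ |y| := by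
    have : |θ| ≤ |y| + |y - θ| := by
      have := abs_sub_abs_le_abs_sub θ y
      rw [abs_sub_comm θ y] at this; linarith
    linarith
  have a2 : |y| ≤ 3 * Real.pi / 2 := by
    have := abs_sub_abs_le_abs_sub y θ
    linarith
  rcases le_or_gt |y| Real.pi with h | h
  · have := Real.cos_le_one_sub_mul_cos_sq h
    have e : θ ^ 2 / (2 * Real.pi ^ 2) ≤ 2 / Real.pi ^ 2 * y ^ 2 := by
      rw [← sq_abs θ, ← sq_abs y]
      have : |θ| ^ 2 ≤ 4 * |y| ^ 2 := by nlinarith [abs_nonneg θ, abs_nonneg y]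
      calc _ ≤ (4 * |y| ^ 2) / (2 * Real.pi ^ 2) := by gcongr
        _ = _ := by field_simp; ring
    linarith
  · have : Real.cos y ≤ 0 := by
      rw [← Real.cos_abs]
      exact Real.cos_nonpos_of_pi_div_two_le_of_le (by linarith) (by linarith)
    have e : θ ^ 2 / (2 * Real.pi ^ 2) ≤ 1 := by
      rw [div_le_one (by positivity), ← sq_abs θ]
      nlinarith [abs_nonneg θ]
    linarith

theorem lint_Dk (b h θ : ℝ) (hb : 0 < b) (hb1 : b ≤ 1) (hh : 0 < h) (hθ : |θ| ≤ Real.pi) :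
    ∫⁻ t in Set.Ioi (0:ℝ), ‖Dk b h t θ‖ₑ ≤
      ENNReal.ofReal (800 * Jc / b * (1 + (θ / h) ^ 2)⁻¹) := by
  have hJ := Jc_nonneg
  have hp := Real.pi_pos
  have hkm : ∀ θ, Measurable (fun t => kf b t θ) := fun θ => by
    unfold kf; fun_prop
  rcases le_or_gt |θ| (2 * h) with h1 | h1
  · have e1 : ∀ t, ‖Dk b h t θ‖ₑ ≤ 2 * ‖kf b t θ‖ₑ + ‖kf b t (θ + h)‖ₑ + ‖kf b t (θ - h)‖ₑ := by
      intro t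
      unfold Dk
      refine (enorm_sub_le).trans ?_
      gcongr
      refine (enorm_sub_le).trans ?_
      gcongr
      rw [enorm_mul]
      simp [Real.enorm_eq_ofReal_abs]
    calc ∫⁻ t in Set.Ioi (0:ℝ), ‖Dk b h t θ‖ₑ ≤ ∫⁻ t in Set.Ioi (0:ℝ), (2 * ‖kf b t θ‖ₑ + ‖kf b t (θ + h)‖ₑ + ‖kf b t (θ - h)‖ₑ) :=
          lintegral_mono e1
      _ = 2 * (∫⁻ t in Set.Ioi (0:ℝ), ‖kf b t θ‖ₑ) + (∫⁻ t in Set.Ioi (0:ℝ), ‖kf b t (θ + h)‖ₑ) + ∫⁻ t in Set.Ioi (0:ℝ), ‖kf b t (θ - h)‖ₑ := by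
          rw [lintegral_add_right _ (hkm _).enorm, lintegral_add_right _ (hkm _).enorm, lintegral_const_mul _ (hkm _).enorm]
      _ ≤ 2 * ENNReal.ofReal (2 * Jc / b) + ENNReal.ofReal (2 * Jc / b) + ENNReal.ofReal (2 * Jc / b) := by
          gcongr <;> exact lint_kf b _ hb hb1
      _ = ENNReal.ofReal (8 * Jc / b) := by
          have : (2 : ENNReal) = ENNReal.ofReal 2 := by simp
          rw [this, ← ENNReal.ofReal_mul (by norm_num), ← ENNReal.ofReal_add (by positivity) (by positivity),
            ← ENNReal.ofReal_add (by positivity) (by positivity)]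
          congr 1; ring
      _ ≤ _ := by
          refine ENNReal.ofReal_le_ofReal ?_
          have : (5:ℝ)⁻¹ ≤ (1 + (θ / h) ^ 2)⁻¹ := by
            refine inv_anti₀ (by positivity) ?_
            rw [div_pow, ← sq_abs θ]
            have : |θ| ^ 2 / h ^ 2 ≤ 4 := by
              rw [div_le_iff₀ (by positivity)]
              nlinarith [abs_nonneg θ]
            linarith
          calc 8 * Jc / b ≤ 800 * Jc / b * 5⁻¹ := by
                have : 0 ≤ Jc / b := by positivity
                calc _ = 8 * (Jc / b) := by ring
                  _ ≤ 160 * (Jc / b) := by linarith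
                  _ = _ := by ring
            _ ≤ _ := by gcongr
  · have hθ0 : 0 < |θ| := by linarith
    have hθ2 : 0 < θ ^ 2 := by rw [← sq_abs]; positivity
    set v := θ ^ 2 / (2 * Real.pi ^ 2) with hv
    have hv0 : 0 < v := by positivity
    have hv1 : v ≤ 1 := by
      rw [hv, div_le_one (by positivity), ← sq_abs θ]
      nlinarith [abs_nonneg θ]
    calc ∫⁻ t in Set.Ioi (0:ℝ), ‖Dk b h t θ‖ₑ
        ≤ ∫⁻ t in Set.Ioi (0:ℝ), ENNReal.ofReal (32 * h ^ 2) * ENNReal.ofReal (((t - 1) ^ 2 + 2 * b * t * v) ^ (-(3:ℝ) / 2)) := by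
          refine setLIntegral_mono' measurableSet_Ioi fun t ht => ?_
          have ht : 0 < t := ht
          rw [Real.enorm_eq_ofReal_abs, ← ENNReal.ofReal_mul (by positivity)]
          refine ENNReal.ofReal_le_ofReal ?_
          have := kf_second_diff ((t - 1) ^ 2) (2 * b * t) ((t - 1) ^ 2 + 2 * b * t * v) θ h (by positivity)
            (by positivity) hh.le (by positivity) (fun y hy => by
              have := cos_low θ h y hθ h1.le hy
              gcongr)
          simp only [Dk, kf]
          refine this.trans (le_of_eq (by ring))
      _ = ENNReal.ofReal (32 * h ^ 2) * ∫⁻ t in Set.Ioi (0:ℝ), ENNReal.ofReal (((t - 1) ^ 2 + 2 * b * t * v) ^ (-(3:ℝ) / 2)) := by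
          exact lintegral_const_mul' _ _ ENNReal.ofReal_ne_top
      _ ≤ ENNReal.ofReal (32 * h ^ 2) * ENNReal.ofReal (Jc / (b * v)) := by
          gcongr; exact lint_Q b v hb hb1 hv0 hv1
      _ = ENNReal.ofReal (32 * h ^ 2 * (Jc / (b * v))) := by rw [← ENNReal.ofReal_mul (by positivity)]
      _ ≤ _ := by
          refine ENNReal.ofReal_le_ofReal ?_
          have a : (1 + (θ / h) ^ 2)⁻¹ ≥ 4 / 5 * (h ^ 2 / θ ^ 2) := by
            have : 4 * h ^ 2 ≤ θ ^ 2 := by rw [← sq_abs θ]; nlinarith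
            have e : (1 + (θ / h) ^ 2)⁻¹ = h ^ 2 / (h ^ 2 + θ ^ 2) := by field_simp
            rw [e, ge_iff_le, le_div_iff₀ (by positivity)]
            rw [show 4 / 5 * (h ^ 2 / θ ^ 2) * (h ^ 2 + θ ^ 2) = (4 / 5 * (h ^ 2 * (h ^ 2 + θ ^ 2))) / θ ^ 2 by ring, div_le_iff₀ hθ2]
            nlinarith [sq_nonneg h]
          have hp2 : Real.pi ^ 2 ≤ 10 := by nlinarith [Real.pi_lt_d2, Real.pi_pos]
          calc 32 * h ^ 2 * (Jc / (b * v)) = 64 * Real.pi ^ 2 * (Jc / b * (h ^ 2 / θ ^ 2)) := by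
                rw [hv]; field_simp; ring
            _ ≤ 64 * 10 * (Jc / b * (h ^ 2 / θ ^ 2)) := by gcongr
            _ = 800 * Jc / b * (4 / 5 * (h ^ 2 / θ ^ 2)) := by ring
            _ ≤ _ := by gcongr

theorem lint_Dk2 (b h : ℝ) (hb : 0 < b) (hb1 : b ≤ 1) (hh : 0 < h) :
    ∫⁻ θ in Set.Ioc (-Real.pi) Real.pi, ∫⁻ t in Set.Ioi (0:ℝ), ‖Dk b h t θ‖ₑ ≤
      ENNReal.ofReal (800 * Jc / b * (Real.pi * h)) := by
  have hJ := Jc_nonneg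
  have hI : Integrable (fun θ : ℝ => (1 + (θ / h) ^ 2)⁻¹) :=
    integrable_inv_one_add_sq.comp_div hh.ne'
  calc _ ≤ ∫⁻ θ in Set.Ioc (-Real.pi) Real.pi, ENNReal.ofReal (800 * Jc / b * (1 + (θ / h) ^ 2)⁻¹) :=
        setLIntegral_mono' measurableSet_Ioc fun θ hθ =>
          lint_Dk b h θ hb hb1 hh (abs_le.2 ⟨hθ.1.le, hθ.2⟩)
    _ ≤ ∫⁻ θ : ℝ, ENNReal.ofReal (800 * Jc / b * (1 + (θ / h) ^ 2)⁻¹) := setLIntegral_le_lintegral _ _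
    _ = _ := by
      rw [← ofReal_integral_eq_lintegral_ofReal (hI.const_mul _) (Filter.Eventually.of_forall fun t => by positivity)]
      rw [integral_const_mul, Measure.integral_comp_div (fun x : ℝ => (1 + x ^ 2)⁻¹) h, integral_univ_inv_one_add_sq,
        abs_of_pos hh, smul_eq_mul, mul_comm h]

end ConeAux

open MeasureTheory
open Real

namespace ConeAux

theorem ck_formula (α t θ t' θ' : ℝ) (ht : 0 ≤ t) (ht' : 0 ≤ t') : coneKernel α t θ t' θ' =
    Real.sin α * Real.cos α * (t' * (1 - Real.cos (θ - θ')) *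
      ((t - t') ^ 2 + 2 * Real.sin α ^ 2 * (t * t') * (1 - Real.cos (θ - θ'))) ^ (-(3:ℝ) / 2)) := by
  have hc : Real.cos (θ - θ') = Real.cos θ * Real.cos θ' + Real.sin θ * Real.sin θ' := Real.cos_sub _ _
  have h1 := Real.sin_sq_add_cos_sq α
  have h2 := Real.sin_sq_add_cos_sq θ
  have h3 := Real.sin_sq_add_cos_sq θ'
  have hQ0 : 0 ≤ (t - t') ^ 2 + 2 * Real.sin α ^ 2 * (t * t') * (1 - Real.cos (θ - θ')) := by
    have : 0 ≤ 1 - Real.cos (θ - θ') := by linarith [Real.cos_le_one (θ - θ')]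
    positivity
  have hin : (inner ℝ (coneParam α t θ - coneParam α t' θ') (coneNormal α θ) : ℝ) =
      Real.sin α * Real.cos α * (t' * (1 - Real.cos (θ - θ'))) := by
    rw [hc]
    simp only [coneParam, coneNormal, PiLp.inner_apply, Fin.sum_univ_three, PiLp.sub_apply]
    simp
    linear_combination (Real.sin α * Real.cos α * t) * h2
  have hn : ‖coneParam α t' θ' - coneParam α t θ‖ =
      √((t - t') ^ 2 + 2 * Real.sin α ^ 2 * (t * t') * (1 - Real.cos (θ - θ'))) := by
    rw [hc, EuclideanSpace.norm_eq]
    congr 1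
    simp only [coneParam, Fin.sum_univ_three, PiLp.sub_apply]
    simp
    linear_combination (Real.sin α ^ 2 * t ^ 2) * h2 + (Real.sin α ^ 2 * t' ^ 2) * h3 + (t - t') ^ 2 * h1
  rw [coneKernel, hin, hn, div_eq_mul_inv]
  have : (√((t - t') ^ 2 + 2 * Real.sin α ^ 2 * (t * t') * (1 - Real.cos (θ - θ'))) ^ 3)⁻¹ =
      ((t - t') ^ 2 + 2 * Real.sin α ^ 2 * (t * t') * (1 - Real.cos (θ - θ'))) ^ (-(3:ℝ) / 2) := by
    rw [neg_div, Real.rpow_neg hQ0, Real.sqrt_eq_rpow, ← Real.rpow_natCast, ← Real.rpow_mul hQ0]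
    norm_num
  rw [this]; ring

theorem ck_one (α t θ : ℝ) (ht : 0 ≤ t) :
    coneKernel α t θ 1 0 = Real.sin α * Real.cos α * kf (Real.sin α ^ 2) t θ := by
  rw [ck_formula α t θ 1 0 ht zero_le_one]
  simp [kf]

theorem ck_scale (α t θ t' θ' : ℝ) (ht : 0 ≤ t) (ht' : 0 < t') : coneKernel α t θ t' θ' =
    Real.sin α * Real.cos α * (kf (Real.sin α ^ 2) (t / t') (θ - θ') / t' ^ 2) := by
  rw [ck_formula α t θ t' θ' ht ht'.le, kf]
  have hw : 0 ≤ 1 - Real.cos (θ - θ') := by linarith [Real.cos_le_one (θ - θ')]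
  have e : (t - t') ^ 2 + 2 * Real.sin α ^ 2 * (t * t') * (1 - Real.cos (θ - θ')) =
      t' ^ 2 * ((t / t' - 1) ^ 2 + 2 * Real.sin α ^ 2 * (t / t') * (1 - Real.cos (θ - θ'))) := by
    field_simp
  have e2 : (t' ^ 2) ^ (-(3:ℝ) / 2) = (t' ^ 3)⁻¹ := by
    rw [← Real.rpow_natCast, ← Real.rpow_mul ht'.le, ← Real.rpow_natCast, ← Real.rpow_neg ht'.le]
    norm_num
  rw [e, Real.mul_rpow (by positivity) (by positivity), e2]
  field_simp

noncomputable def Mk (b : ℝ) (n : ℤ) (t : ℝ) : ℂ :=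
  ∫ θ in (0:ℝ)..(2 * π), Complex.exp (-Complex.I * (n : ℂ) * (θ : ℂ)) * (kf b t θ : ℂ)

theorem mk_Mk (α : ℝ) (n : ℤ) (t : ℝ) (ht : 0 ≤ t) : modalKernel α n t 1 =
    ((1 / (2 * π) : ℝ) : ℂ) * ((Real.sin α * Real.cos α : ℝ) * Mk (Real.sin α ^ 2) n t) := by
  have h : ∀ θ : ℝ, Complex.exp (-Complex.I * (n : ℂ) * (θ : ℂ)) * (coneKernel α t θ 1 0 : ℂ) =
      ((Real.sin α * Real.cos α : ℝ) : ℂ) * (Complex.exp (-Complex.I * (n : ℂ) * (θ : ℂ)) * (kf (Real.sin α ^ 2) t θ : ℂ)) := by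
    intro θ
    rw [ck_one α t θ ht]
    push_cast; ring
  simp_rw [modalKernel, h, intervalIntegral.integral_const_mul, Mk]

theorem norm_e (n : ℤ) (θ : ℝ) : ‖Complex.exp (-Complex.I * (n : ℂ) * (θ : ℂ))‖ₑ = 1 := by
  rw [← ofReal_norm, Complex.norm_exp]; simp

theorem Mk_le (b : ℝ) (n : ℤ) (t : ℝ) : ‖Mk b n t‖ₑ ≤ ∫⁻ θ in Set.Ioc 0 (2 * π), ‖kf b t θ‖ₑ := by
  rw [Mk, intervalIntegral.integral_of_le (by positivity)]
  refine (enorm_integral_le_lintegral_enorm _).trans (le_of_eq ?_)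
  refine lintegral_congr fun θ => ?_
  rw [enorm_mul, norm_e, one_mul]
  simp [← ofReal_norm]

theorem kf_cont (b t : ℝ) (hb : 0 ≤ b) (ht : 0 < t) (ht1 : t ≠ 1) : Continuous (kf b t) := by
  unfold kf
  refine (by fun_prop : Continuous fun θ => 1 - Real.cos θ).mul ?_
  refine Continuous.rpow_const (by fun_prop) fun θ => Or.inl ?_
  have : 0 ≤ 1 - Real.cos θ := by linarith [Real.cos_le_one θ]
  have : 0 < (t - 1) ^ 2 := by have := sub_ne_zero.2 ht1; positivity
  positivity

theorem kf_per (b t θ : ℝ) : kf b t (θ + 2 * π) = kf b t θ := by simp [kf]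

theorem e_shift (n : ℤ) (hn : n ≠ 0) (s : ℝ) (hs : s = 1 ∨ s = -1) (θ : ℝ) :
    Complex.exp (-Complex.I * (n : ℂ) * ((θ + s * (π / n.natAbs) : ℝ) : ℂ)) =
      - Complex.exp (-Complex.I * (n : ℂ) * (θ : ℂ)) := by
  have key : ∀ e : ℝ, (e = 1 ∨ e = -1) → Complex.exp (-Complex.I * (e * π)) = -1 := by
    rintro e (rfl | rfl)
    · rw [show -Complex.I * (((1:ℝ):ℂ) * π) = -(π * Complex.I) by push_cast; ring, Complex.exp_neg, Complex.exp_pi_mul_I]; norm_num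
    · rw [show -Complex.I * (((-1:ℝ):ℂ) * π) = (π * Complex.I) by push_cast; ring, Complex.exp_pi_mul_I]
  have hN : (n.natAbs : ℝ) ≠ 0 := by simpa using hn
  have hnn : (n : ℝ) = n.natAbs ∨ (n : ℝ) = -n.natAbs := by
    rcases Int.natAbs_eq n with h | h
    · left; simpa using congrArg (fun x : ℤ => (x : ℝ)) h
    · right; simpa using congrArg (fun x : ℤ => (x : ℝ)) h
  have : ∃ e : ℝ, (e = 1 ∨ e = -1) ∧ (n : ℝ) * (s * (π / n.natAbs)) = e * π := by
    rcases hnn with h | h <;> rcases hs with rfl | rfl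
    · refine ⟨1, by simp, ?_⟩; rw [h]; field_simp
    · refine ⟨-1, by simp, ?_⟩; rw [h]; field_simp
    · refine ⟨-1, by simp, ?_⟩; rw [h]; field_simp
    · refine ⟨1, by simp, ?_⟩; rw [h]; field_simp
  obtain ⟨e, he, h⟩ := this
  have h' : (n : ℂ) * ((s * (π / n.natAbs) : ℝ) : ℂ) = e * π := by exact_mod_cast congrArg (fun x : ℝ => (x : ℂ)) h
  rw [Complex.ofReal_add, mul_add, Complex.exp_add, mul_assoc (-Complex.I) (n : ℂ) ((s * (π / n.natAbs) : ℝ) : ℂ), h', key e he]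
  ring

theorem Mk_four (b : ℝ) (n : ℤ) (hn : n ≠ 0) (t : ℝ) (hb : 0 ≤ b) (ht : 0 < t) (ht1 : t ≠ 1) :
    4 * Mk b n t = ∫ θ in (-π)..π, Complex.exp (-Complex.I * (n : ℂ) * (θ : ℂ)) * (Dk b (π / n.natAbs) t θ : ℂ) := by
  set h := π / n.natAbs with hh
  set F : ℝ → ℂ := fun θ => Complex.exp (-Complex.I * (n : ℂ) * (θ : ℂ)) * (kf b t θ : ℂ) with hF
  have hFc : Continuous F := by
    have := kf_cont b t hb ht ht1
    simp only [hF]; fun_prop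
  have hFp : Function.Periodic F (2 * π) := by
    intro θ
    simp only [hF, kf_per]
    congr 1
    rw [Complex.exp_eq_exp_iff_exists_int]
    exact ⟨-n, by push_cast; ring⟩
  have hM : ∀ a, ∫ θ in a..(a + 2 * π), F θ = Mk b n t := by
    intro a
    rw [hFp.intervalIntegral_add_eq a 0, zero_add, Mk]
  have e : ∀ θ : ℝ, Complex.exp (-Complex.I * (n : ℂ) * (θ : ℂ)) * (Dk b h t θ : ℂ) =
      2 * F θ + F (θ + h) + F (θ - h) := by
    intro θ
    have e1 := e_shift n hn 1 (by simp) θ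
    have e2 := e_shift n hn (-1) (by simp) θ
    rw [← hh, one_mul] at e1
    rw [← hh, neg_one_mul, ← sub_eq_add_neg] at e2
    simp only [hF, e1, e2, Dk]
    push_cast; ring
  simp_rw [e]
  rw [intervalIntegral.integral_add, intervalIntegral.integral_add, intervalIntegral.integral_const_mul,
    intervalIntegral.integral_comp_add_right, intervalIntegral.integral_comp_sub_right]
  · have a1 := hM (-π)
    have a2 := hM (-π + h)
    have a3 := hM (-π - h)
    rw [show -π + 2 * π = π by ring] at a1
    rw [show -π + h + 2 * π = π + h by ring] at a2
    rw [show -π - h + 2 * π = π - h by ring] at a3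
    rw [a1, a2, a3]; ring
  all_goals exact Continuous.intervalIntegrable (by fun_prop) _ _

theorem Mk_bound (b : ℝ) (n : ℤ) (hb : 0 < b) (hb1 : b ≤ 1) :
    ∫⁻ t in Set.Ioi (0:ℝ), ‖Mk b n t‖ₑ ≤ ENNReal.ofReal (1600 * Jc / b * π ^ 2 / (n.natAbs + 1)) := by
  have hJ := Jc_nonneg
  rcases eq_or_ne n 0 with rfl | hn
  · calc ∫⁻ t in Set.Ioi (0:ℝ), ‖Mk b 0 t‖ₑ ≤ ∫⁻ t in Set.Ioi (0:ℝ), ∫⁻ θ in Set.Ioc 0 (2 * π), ‖kf b t θ‖ₑ :=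
          lintegral_mono fun t => Mk_le b 0 t
      _ = ∫⁻ θ in Set.Ioc 0 (2 * π), ∫⁻ t in Set.Ioi (0:ℝ), ‖kf b t θ‖ₑ :=
          lintegral_lintegral_swap (kf_meas b).enorm.aemeasurable
      _ ≤ ∫⁻ θ in Set.Ioc 0 (2 * π), ENNReal.ofReal (2 * Jc / b) := lintegral_mono fun θ => lint_kf b θ hb hb1
      _ = ENNReal.ofReal (2 * Jc / b * (2 * π)) := by
          rw [setLIntegral_const, Real.volume_Ioc, sub_zero, ← ENNReal.ofReal_mul (by positivity)]
      _ ≤ _ := by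
          refine ENNReal.ofReal_le_ofReal ?_
          have h3 := Real.pi_gt_three
          have : 0 ≤ Jc / b := by positivity
          simp only [Int.natAbs_zero, Nat.cast_zero, zero_add, div_one]
          calc _ = 4 * (Jc / b * π) := by ring
            _ ≤ 1600 * (Jc / b * π) * π := by nlinarith [mul_nonneg this (by linarith : 0 ≤ π)]
            _ = _ := by ring
  · have hN : 1 ≤ (n.natAbs : ℝ) := by
      have : 1 ≤ n.natAbs := Int.natAbs_pos.2 hn
      exact_mod_cast this
    have hh : 0 < π / n.natAbs := by positivity
    calc ∫⁻ t in Set.Ioi (0:ℝ), ‖Mk b n t‖ₑ ≤ ∫⁻ t in Set.Ioi (0:ℝ), ∫⁻ θ in Set.Ioc (-π) π, ‖Dk b (π / n.natAbs) t θ‖ₑ := by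
          refine lintegral_mono_ae ?_
          have h1 : ∀ᵐ t : ℝ ∂(volume.restrict (Set.Ioi (0:ℝ))), t ≠ 1 := by
            refine ae_restrict_of_ae ?_
            simp [ae_iff]
          filter_upwards [h1, ae_restrict_mem measurableSet_Ioi] with t h1 h0
          have h4 := Mk_four b n hn t hb.le h0 h1
          have : ‖Mk b n t‖ₑ ≤ ‖4 * Mk b n t‖ₑ := by
            rw [enorm_le_iff_norm_le, norm_mul]
            norm_num
            linarith [norm_nonneg (Mk b n t)]
          refine this.trans ?_
          rw [h4, intervalIntegral.integral_of_le (by linarith [Real.pi_pos])]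
          refine (enorm_integral_le_lintegral_enorm _).trans (le_of_eq ?_)
          refine lintegral_congr fun θ => ?_
          rw [enorm_mul, norm_e, one_mul]
          simp [← ofReal_norm]
      _ = ∫⁻ θ in Set.Ioc (-π) π, ∫⁻ t in Set.Ioi (0:ℝ), ‖Dk b (π / n.natAbs) t θ‖ₑ :=
          lintegral_lintegral_swap (Dk_meas b _).enorm.aemeasurable
      _ ≤ _ := lint_Dk2 b _ hb hb1 hh
      _ ≤ _ := by
          refine ENNReal.ofReal_le_ofReal ?_
          rw [le_div_iff₀ (by positivity)]
          have : 800 * Jc / b * (π * (π / n.natAbs)) * (n.natAbs + 1) = 800 * Jc / b * π ^ 2 * ((n.natAbs + 1) / n.natAbs) := by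
            field_simp
          rw [this]
          calc _ ≤ 800 * Jc / b * π ^ 2 * 2 := by
                gcongr
                rw [div_le_iff₀ (by positivity)]; linarith
            _ = _ := by ring

theorem eig_bound (α : ℝ) (hα0 : 0 < α) (hαπ : α < π) : ∃ C : ℝ, 0 < C ∧ ∀ (n : ℤ) (ξ : ℝ),
    ‖modalEigenvalue α n ξ‖ ≤ C / ((n.natAbs : ℝ) + 1) := by
  have hs : 0 < Real.sin α := Real.sin_pos_of_pos_of_lt_pi hα0 hαπ
  have hb : 0 < Real.sin α ^ 2 := by positivity
  have hb1 : Real.sin α ^ 2 ≤ 1 := by nlinarith [Real.sin_le_one α]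
  have hJ := Jc_nonneg
  refine ⟨‖((Real.sin α : ℝ) : ℂ)‖ * (‖((1 / (2 * π) : ℝ) : ℂ) * ((Real.sin α * Real.cos α : ℝ) : ℂ)‖ * (1600 * Jc / Real.sin α ^ 2 * π ^ 2)) + 1, by positivity, fun n ξ => ?_⟩
  have key : ‖∫ t in Set.Ioi (0:ℝ), (t : ℂ) ^ (1 + Complex.I * (ξ : ℂ)) * modalKernel α n t 1 * (t : ℂ)⁻¹‖ₑ
      ≤ ENNReal.ofReal (‖((1 / (2 * π) : ℝ) : ℂ) * ((Real.sin α * Real.cos α : ℝ) : ℂ)‖ * (1600 * Jc / Real.sin α ^ 2 * π ^ 2 / (n.natAbs + 1))) := by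
    refine (enorm_integral_le_lintegral_enorm _).trans ?_
    calc _ = ∫⁻ t in Set.Ioi (0:ℝ), ‖((1 / (2 * π) : ℝ) : ℂ) * ((Real.sin α * Real.cos α : ℝ) : ℂ)‖ₑ * ‖Mk (Real.sin α ^ 2) n t‖ₑ := by
          refine setLIntegral_congr_fun measurableSet_Ioi fun t ht => ?_
          have ht : 0 < t := ht
          rw [mk_Mk α n t ht.le, ← enorm_mul, ← ofReal_norm, ← ofReal_norm]
          congr 1
          simp only [norm_mul, norm_inv]
          rw [Complex.norm_cpow_eq_rpow_re_of_pos ht]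
          simp [abs_of_pos ht]
          field_simp
      _ = ‖((1 / (2 * π) : ℝ) : ℂ) * ((Real.sin α * Real.cos α : ℝ) : ℂ)‖ₑ * ∫⁻ t in Set.Ioi (0:ℝ), ‖Mk (Real.sin α ^ 2) n t‖ₑ :=
          lintegral_const_mul' _ _ enorm_ne_top
      _ ≤ _ := by
          rw [ENNReal.ofReal_mul (norm_nonneg _), ofReal_norm]
          gcongr
          exact Mk_bound _ n hb hb1
  rw [← ofReal_norm, ENNReal.ofReal_le_ofReal_iff (by positivity)] at key
  rw [modalEigenvalue, norm_mul]
  refine (mul_le_mul_of_nonneg_left key (norm_nonneg _)).trans ?_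
  rw [le_div_iff₀ (by positivity)]
  refine le_trans (le_of_eq ?_) (le_add_of_nonneg_right zero_le_one)
  field_simp

end ConeAux

open MeasureTheory
open Real

namespace ConeAux

theorem exp_lint (g : ℝ → ENNReal) :
    ∫⁻ t in Set.Ioi (0:ℝ), g t = ∫⁻ x : ℝ, ENNReal.ofReal (Real.exp x) * g (Real.exp x) := by
  have := lintegral_image_eq_lintegral_abs_deriv_mul (s := Set.univ) MeasurableSet.univ
    (fun x _ => (Real.hasDerivAt_exp x).hasDerivWithinAt) Real.exp_injective.injOn g
  rw [Set.image_univ, Real.range_exp, Measure.restrict_univ] at this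
  simpa using this

theorem exp_int (g : ℝ → ℂ) :
    ∫ t in Set.Ioi (0:ℝ), g t = ∫ x : ℝ, (Real.exp x : ℂ) * g (Real.exp x) := by
  have := integral_image_eq_integral_abs_deriv_smul (s := Set.univ) MeasurableSet.univ
    (fun x _ => (Real.hasDerivAt_exp x).hasDerivWithinAt) Real.exp_injective.injOn g
  rw [Set.image_univ, Real.range_exp, Measure.restrict_univ] at this
  rw [this]
  refine integral_congr_ae (Filter.Eventually.of_forall fun x => ?_)
  simp

noncomputable def cosC (y : AddCircle (2 * Real.pi)) : ℝ := (fourier 1 y : ℂ).re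

theorem cosC_coe (θ : ℝ) : cosC (θ : AddCircle (2 * Real.pi)) = Real.cos θ := by
  have h : (Real.pi : ℂ) ≠ 0 := by exact_mod_cast Real.pi_ne_zero
  rw [cosC, fourier_coe_apply, ← Complex.exp_ofReal_mul_I_re]
  congr 2
  push_cast
  field_simp

theorem cosC_cont : Continuous cosC := by unfold cosC; fun_prop

noncomputable def kfC (b t : ℝ) (y : AddCircle (2 * Real.pi)) : ℝ :=
  (1 - cosC y) * ((t - 1) ^ 2 + 2 * b * t * (1 - cosC y)) ^ (-(3:ℝ) / 2)

theorem kfC_coe (b t θ : ℝ) : kfC b t (θ : AddCircle (2 * Real.pi)) = kf b t θ := by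
  simp only [kfC, kf, cosC_coe]

noncomputable def kk (α : ℝ) (p : GG) : ℂ :=
  ((Real.sin α / (2 * Real.pi) * Real.exp p.1 *
    (Real.sin α * Real.cos α * kfC (Real.sin α ^ 2) (Real.exp p.1) p.2) : ℝ) : ℂ)

theorem kk_meas (α : ℝ) : Measurable (kk α) := by
  have := cosC_cont.measurable
  unfold kk kfC; fun_prop

theorem kk_int (α : ℝ) (hα0 : 0 < α) (hαπ : α < π) : Integrable (kk α) := by
  have hs : 0 < Real.sin α := Real.sin_pos_of_pos_of_lt_pi hα0 hαπ
  have hb : 0 < Real.sin α ^ 2 := by positivity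
  have hb1 : Real.sin α ^ 2 ≤ 1 := by nlinarith [Real.sin_le_one α]
  refine ⟨(kk_meas α).aestronglyMeasurable, ?_⟩
  rw [hasFiniteIntegral_iff_enorm]
  rw [show (volume : Measure GG) = (volume : Measure ℝ).prod (volume : Measure (AddCircle (2 * Real.pi))) from rfl]
  rw [lintegral_prod_symm _ (kk_meas α).enorm.aemeasurable]
  set c : ENNReal := ‖Real.sin α / (2 * Real.pi) * (Real.sin α * Real.cos α)‖ₑ with hc
  have : ∀ y : AddCircle (2 * Real.pi), ∫⁻ x : ℝ, ‖kk α (x, y)‖ₑ ≤ c * ENNReal.ofReal (2 * Jc / Real.sin α ^ 2) := by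
    intro y
    induction y using QuotientAddGroup.induction_on with | H θ => ?_
    calc ∫⁻ x : ℝ, ‖kk α (x, (θ : AddCircle (2 * Real.pi)))‖ₑ
        = ∫⁻ x : ℝ, c * (ENNReal.ofReal (Real.exp x) * ‖kf (Real.sin α ^ 2) (Real.exp x) θ‖ₑ) := by
          refine lintegral_congr fun x => ?_
          have : (kk α (x, (θ : AddCircle (2 * Real.pi)))) = ((Real.sin α / (2 * Real.pi) * (Real.sin α * Real.cos α) * (Real.exp x * kf (Real.sin α ^ 2) (Real.exp x) θ) : ℝ) : ℂ) := by
            simp only [kk, kfC_coe]; push_cast; ring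
          rw [this, ← ofReal_norm, Complex.norm_real, ofReal_norm, enorm_mul, enorm_mul _ (kf _ _ _), Real.enorm_of_nonneg (Real.exp_pos x).le]
      _ = c * ∫⁻ t in Set.Ioi (0:ℝ), ‖kf (Real.sin α ^ 2) t θ‖ₑ := by
          rw [lintegral_const_mul' _ _ enorm_ne_top, ← exp_lint (fun t => ‖kf (Real.sin α ^ 2) t θ‖ₑ)]
      _ ≤ _ := by
          gcongr; exact lint_kf _ θ hb hb1
  refine (lintegral_mono this).trans_lt ?_
  rw [lintegral_const]
  refine ENNReal.mul_lt_top (ENNReal.mul_lt_top enorm_lt_top ENNReal.ofReal_lt_top) (measure_lt_top _ _)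

theorem kk_chr (α : ℝ) (hα0 : 0 < α) (hαπ : α < π) (ξ : ℝ) (n : ℤ) :
    ∫ g, kk α g * chr ξ n g = modalEigenvalue α (-n) ξ := by
  have hI : Integrable (fun g => kk α g * chr ξ n g) := by
    refine (kk_int α hα0 hαπ).mul_bdd (c := 1) (chr_cont ξ n).aestronglyMeasurable ?_
    exact Filter.Eventually.of_forall fun g => (chr_norm ξ n g).le
  rw [show (volume : Measure GG) = (volume : Measure ℝ).prod (volume : Measure (AddCircle (2 * Real.pi))) from rfl] at hI ⊢
  rw [integral_prod _ hI, modalEigenvalue, ← integral_const_mul, exp_int]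
  refine integral_congr_ae (Filter.Eventually.of_forall fun x => ?_)
  have hx := Real.exp_pos x
  have hx0 : (Real.exp x : ℂ) ≠ 0 := by exact_mod_cast hx.ne'
  simp only []
  rw [← AddCircle.integral_preimage (2 * Real.pi) 0 (fun y => kk α (x, y) * chr ξ n (x, y))]
  rw [zero_add, ← intervalIntegral.integral_of_le (by positivity), mk_Mk α _ _ hx.le]
  have e : ∀ θ : ℝ, kk α (x, (θ : AddCircle (2 * Real.pi))) * chr ξ n (x, (θ : AddCircle (2 * Real.pi))) =
      (((Real.sin α / (2 * Real.pi) * Real.exp x * (Real.sin α * Real.cos α) : ℝ) : ℂ) * Complex.exp (Complex.I * ξ * x)) *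
        (Complex.exp (-Complex.I * ((-n : ℤ) : ℂ) * (θ : ℂ)) * (kf (Real.sin α ^ 2) (Real.exp x) θ : ℂ)) := by
    intro θ
    rw [chr_apply, kk, kfC_coe]
    push_cast
    rw [show -Complex.I * -(n:ℂ) * θ = Complex.I * n * θ by ring]
    ring
  simp_rw [e]
  rw [intervalIntegral.integral_const_mul, ← Mk, Complex.cpow_add _ _ hx0, Complex.cpow_one]
  have e2 : (Real.exp x : ℂ) ^ (Complex.I * (ξ : ℂ)) = Complex.exp (Complex.I * ξ * x) := by
    rw [Complex.cpow_def_of_ne_zero hx0, ← Complex.ofReal_log hx.le, Real.log_exp]; congr 1; ring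
  rw [e2]
  push_cast
  rw [← Complex.ofReal_exp] 
  field_simp

end ConeAux

open MeasureTheory
open Real

namespace ConeAux

section transfer
variable {X Y : Type} [MeasurableSpace X] [MeasurableSpace Y] {μ : Measure X} {m : Measure Y}
  {Φ : Y → X} {Ψ : X → Y} {w : Y → ℝ}

theorem tf_qmp (hw : Measurable w) (hw0 : ∀ y, 0 < w y)
    (hΦ : MeasurePreserving Φ (m.withDensity fun y => ENNReal.ofReal (w y ^ 2)) μ) :
    Measure.QuasiMeasurePreserving Φ m μ := by
  refine hΦ.quasiMeasurePreserving.mono_left ?_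
  refine withDensity_absolutelyContinuous' (by fun_prop) (Filter.Eventually.of_forall fun y => ?_)
  simp [(hw0 y).ne']

theorem tf_norm (hw : Measurable w) (hw0 : ∀ y, 0 < w y)
    (hΦ : MeasurePreserving Φ (m.withDensity fun y => ENNReal.ofReal (w y ^ 2)) μ)
    (f : X → ℂ) (hf : Measurable f) :
    eLpNorm (fun y => (w y : ℂ) * f (Φ y)) 2 m = eLpNorm f 2 μ := by
  rw [eLpNorm_eq_lintegral_rpow_enorm_toReal (by norm_num) (by norm_num),
    eLpNorm_eq_lintegral_rpow_enorm_toReal (by norm_num) (by norm_num)]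
  congr 1
  rw [← hΦ.lintegral_comp (f := fun x => ‖f x‖ₑ ^ (2:ENNReal).toReal) (by fun_prop)]
  have hΦm := hΦ.measurable
  rw [lintegral_withDensity_eq_lintegral_mul _ (by fun_prop) (by fun_prop)]
  refine lintegral_congr fun y => ?_
  simp only [Pi.mul_apply]
  rw [enorm_mul, ENNReal.mul_rpow_of_nonneg _ _ (by simp)]
  congr 1
  rw [← ofReal_norm, Complex.norm_real, Real.norm_of_nonneg (hw0 y).le, ENNReal.ofReal_rpow_of_pos (hw0 y)]
  simp

theorem tf_exists (hw : Measurable w) (hw0 : ∀ y, 0 < w y)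
    (hΦ : MeasurePreserving Φ (m.withDensity fun y => ENNReal.ofReal (w y ^ 2)) μ)
    (hΨ : Measurable Ψ) (hΨΦ : ∀ y, Ψ (Φ y) = y) :
    ∃ V : Lp ℂ 2 μ ≃ₗᵢ[ℂ] Lp ℂ 2 m, ∀ f : Lp ℂ 2 μ, ∀ᵐ y ∂m, V f y = (w y : ℂ) * f (Φ y) := by
  have hq := tf_qmp hw hw0 hΦ
  have hΦm := hΦ.measurable
  have hmeas : ∀ f : Lp ℂ 2 μ, Measurable f := fun f => (Lp.stronglyMeasurable f).measurable
  have hmem : ∀ f : Lp ℂ 2 μ, MemLp (fun y => (w y : ℂ) * f (Φ y)) 2 m := by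
    intro f
    have := hmeas f
    refine ⟨Measurable.aestronglyMeasurable (by fun_prop), ?_⟩
    rw [tf_norm hw hw0 hΦ f (hmeas f)]
    exact (Lp.memLp f).2
  let L : Lp ℂ 2 μ →ₗ[ℂ] Lp ℂ 2 m :=
    { toFun := fun f => (hmem f).toLp
      map_add' := fun f g => by
        refine Lp.ext ?_
        filter_upwards [(hmem (f + g)).coeFn_toLp, (hmem f).coeFn_toLp, (hmem g).coeFn_toLp,
          Lp.coeFn_add ((hmem f).toLp) ((hmem g).toLp), hq.ae (Lp.coeFn_add f g)] with y h1 h2 h3 h4 h5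
        rw [h1, h4, Pi.add_apply, h2, h3, h5, Pi.add_apply, mul_add]
      map_smul' := fun c f => by
        refine Lp.ext ?_
        filter_upwards [(hmem (c • f)).coeFn_toLp, (hmem f).coeFn_toLp,
          Lp.coeFn_smul c ((hmem f).toLp), hq.ae (Lp.coeFn_smul c f)] with y h1 h2 h4 h5
        rw [h1, RingHom.id_apply, h4, Pi.smul_apply, h2, h5, Pi.smul_apply, smul_eq_mul, smul_eq_mul]; ring }
  have hL : ∀ f, ‖L f‖ = ‖f‖ := by
    intro f
    change ‖(hmem f).toLp‖ = ‖f‖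
    rw [Lp.norm_toLp, tf_norm hw hw0 hΦ f (hmeas f), Lp.norm_def]
  have hs : Function.Surjective L := by
    intro F
    have hF : Measurable F := (Lp.stronglyMeasurable F).measurable
    let f : X → ℂ := fun x => F (Ψ x) / (w (Ψ x) : ℂ)
    have hf : Measurable f := by simp only [f]; fun_prop
    have e : (fun y => (w y : ℂ) * f (Φ y)) = F := by
      funext y
      have : (w y : ℂ) ≠ 0 := by exact_mod_cast (hw0 y).ne'
      simp only [f, hΨΦ]
      field_simp
    have hfm : MemLp f 2 μ := by
      refine ⟨hf.aestronglyMeasurable, ?_⟩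
      rw [← tf_norm hw hw0 hΦ f hf, e]
      exact (Lp.memLp F).2
    refine ⟨hfm.toLp, ?_⟩
    refine Lp.ext ?_
    filter_upwards [(hmem hfm.toLp).coeFn_toLp, hq.ae hfm.coeFn_toLp] with y h1 h2
    refine h1.trans ?_
    rw [h2]
    exact congrFun e y
  refine ⟨LinearIsometryEquiv.ofSurjective ⟨L, hL⟩ hs, fun f => ?_⟩
  exact (hmem f).coeFn_toLp

theorem tf_inv [MeasurableEq X] (hΦ : MeasurePreserving Φ (m.withDensity fun y => ENNReal.ofReal (w y ^ 2)) μ)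
    (hΨ : Measurable Ψ) (hΨΦ : ∀ y, Ψ (Φ y) = y) :
    Measure.QuasiMeasurePreserving Ψ μ m ∧ ∀ᵐ x ∂μ, Φ (Ψ x) = x := by
  constructor
  · refine ⟨hΨ, ?_⟩
    rw [← hΦ.map_eq, Measure.map_map hΨ hΦ.measurable]
    have : Ψ ∘ Φ = id := by funext y; exact hΨΦ y
    rw [this, Measure.map_id]
    exact withDensity_absolutelyContinuous _ _
  · rw [← hΦ.map_eq, ae_map_iff hΦ.measurable.aemeasurable]
    · exact Filter.Eventually.of_forall fun y => by rw [hΨΦ]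
    · exact measurableSet_eq_fun (hΦ.measurable.comp hΨ) measurable_id

theorem tf_int (hw : Measurable w)
    (hΦ : MeasurePreserving Φ (m.withDensity fun y => ENNReal.ofReal (w y ^ 2)) μ)
    (h : X → ℂ) (hh : Measurable h) :
    (Integrable h μ ↔ Integrable (fun y => ((w y ^ 2 : ℝ) : ℂ) * h (Φ y)) m) ∧
      ∫ x, h x ∂μ = ∫ y, ((w y ^ 2 : ℝ) : ℂ) * h (Φ y) ∂m := by
  have e : ∀ y, (ENNReal.ofReal (w y ^ 2)).toReal • h (Φ y) = ((w y ^ 2 : ℝ) : ℂ) * h (Φ y) := by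
    intro y
    rw [ENNReal.toReal_ofReal (by positivity), Complex.real_smul]
  constructor
  · rw [← hΦ.integrable_comp hh.aestronglyMeasurable,
      integrable_withDensity_iff_integrable_smul' (by fun_prop) (by simp)]
    simp only [Function.comp, e]
  · rw [← hΦ.map_eq, integral_map hΦ.measurable.aemeasurable hh.aestronglyMeasurable,
      integral_withDensity_eq_integral_toReal_smul (by fun_prop) (by simp)]
    simp only [e]

end transfer

end ConeAux

open MeasureTheory
open Real

namespace ConeAux

instance volGG : (volume : Measure GG).IsAddHaarMeasure :=
  inferInstanceAs (((volume : Measure ℝ).prod (volume : Measure (AddCircle (2 * Real.pi)))).IsAddHaarMeasure)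

noncomputable def rep (y : AddCircle (2 * Real.pi)) : ℝ := (AddCircle.equivIoc (2 * Real.pi) 0 y : ℝ)

theorem rep_coe (y : AddCircle (2 * Real.pi)) : (rep y : AddCircle (2 * Real.pi)) = y :=
  (AddCircle.equivIoc (2 * Real.pi) 0).symm_apply_apply y

theorem rep_mp : MeasurePreserving rep (volume : Measure (AddCircle (2 * Real.pi)))
    (volume.restrict (Set.Ioo (0:ℝ) (2 * Real.pi))) := by
  have h1 := AddCircle.measurePreserving_equivIoc (2 * Real.pi) (a := 0)
  have h2 : MeasurePreserving (Subtype.val : Set.Ioc (0:ℝ) (0 + 2 * Real.pi) → ℝ)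
      (Measure.comap Subtype.val volume) (volume.restrict (Set.Ioc (0:ℝ) (0 + 2 * Real.pi))) :=
    measurePreserving_subtype_coe measurableSet_Ioc
  have h3 := h2.comp h1
  have e : (volume : Measure ℝ).restrict (Set.Ioo (0:ℝ) (2 * Real.pi)) = volume.restrict (Set.Ioc (0:ℝ) (0 + 2 * Real.pi)) := by
    rw [zero_add, restrict_Ioo_eq_restrict_Ioc]
  rw [e]
  exact h3

theorem exp_mp (s : ℝ) : MeasurePreserving Real.exp
    ((volume : Measure ℝ).withDensity fun x => ENNReal.ofReal (s * Real.exp x ^ 2))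
    ((volume.restrict (Set.Ioi (0:ℝ))).withDensity fun t => ENNReal.ofReal (s * t)) := by
  refine ⟨Real.measurable_exp, ?_⟩
  ext A hA
  rw [Measure.map_apply Real.measurable_exp hA, withDensity_apply _ (Real.measurable_exp hA),
    withDensity_apply _ hA, ← lintegral_indicator hA, ← lintegral_indicator (Real.measurable_exp hA), exp_lint]
  refine lintegral_congr fun x => ?_
  by_cases hx : Real.exp x ∈ A
  · rw [Set.indicator_of_mem hx, Set.indicator_of_mem (show x ∈ Real.exp ⁻¹' A from hx),
      ← ENNReal.ofReal_mul (Real.exp_pos x).le]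
    congr 1; ring
  · rw [Set.indicator_of_notMem hx, Set.indicator_of_notMem (show x ∉ Real.exp ⁻¹' A from hx), mul_zero]

noncomputable def PhiC (g : GG) : ℝ × ℝ := (Real.exp g.1, rep g.2)
noncomputable def PsiC (p : ℝ × ℝ) : GG := (Real.log p.1, (p.2 : AddCircle (2 * Real.pi)))
noncomputable def wC (α : ℝ) (g : GG) : ℝ := √(Real.sin α) * Real.exp g.1

theorem wC_meas (α : ℝ) : Measurable (wC α) := by unfold wC; fun_prop

theorem PsiC_meas : Measurable PsiC := by
  have : Measurable fun θ : ℝ => (θ : AddCircle (2 * Real.pi)) := AddCircle.measurable_mk'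
  unfold PsiC; fun_prop

theorem PsiPhi (g : GG) : PsiC (PhiC g) = g := by
  simp [PsiC, PhiC, rep_coe]

theorem Phi_mp (α : ℝ) (hs : 0 < Real.sin α) : MeasurePreserving PhiC
    ((volume : Measure GG).withDensity fun g => ENNReal.ofReal (wC α g ^ 2)) (muCone α) := by
  have h := (exp_mp (Real.sin α)).prod rep_mp
  rw [prod_withDensity_left (by fun_prop)] at h
  have e : (fun g : GG => ENNReal.ofReal (wC α g ^ 2)) = fun g => ENNReal.ofReal (Real.sin α * Real.exp g.1 ^ 2) := by
    funext g
    rw [wC, mul_pow, Real.sq_sqrt hs.le]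
  rw [e]
  exact h

theorem mu_eq (α : ℝ) : muCone α = (volume.restrict (Set.Ioi (0:ℝ) ×ˢ Set.Ioo (0:ℝ) (2 * π))).withDensity
    fun q : ℝ × ℝ => ENNReal.ofReal (Real.sin α * q.1) := by
  rw [muCone, prod_withDensity_left (by fun_prop), Measure.prod_restrict]
  rfl

theorem mu_int (α : ℝ) (hs : 0 < Real.sin α) (h : ℝ × ℝ → ℂ) :
    (Integrable h (muCone α) ↔ IntegrableOn (fun q => h q * ((Real.sin α * q.1 : ℝ) : ℂ)) (Set.Ioi (0:ℝ) ×ˢ Set.Ioo (0:ℝ) (2 * π))) ∧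
    ∫ q, h q ∂(muCone α) = ∫ q in Set.Ioi (0:ℝ) ×ˢ Set.Ioo (0:ℝ) (2 * π), h q * ((Real.sin α * q.1 : ℝ) : ℂ) := by
  have hS : MeasurableSet (Set.Ioi (0:ℝ) ×ˢ Set.Ioo (0:ℝ) (2 * π)) := measurableSet_Ioi.prod measurableSet_Ioo
  have e : (fun q : ℝ × ℝ => (ENNReal.ofReal (Real.sin α * q.1)).toReal • h q) =ᵐ[volume.restrict (Set.Ioi (0:ℝ) ×ˢ Set.Ioo (0:ℝ) (2 * π))]
      fun q => h q * ((Real.sin α * q.1 : ℝ) : ℂ) := by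
    filter_upwards [ae_restrict_mem hS] with q hq
    have : 0 < q.1 := hq.1
    rw [ENNReal.toReal_ofReal (by positivity), Complex.real_smul, mul_comm]
  rw [mu_eq]
  constructor
  · rw [integrable_withDensity_iff_integrable_smul' (by fun_prop) (by simp), integrable_congr e]
    rfl
  · rw [integral_withDensity_eq_integral_toReal_smul (by fun_prop) (by simp), integral_congr_ae e]

theorem kernel_id (α : ℝ) (hs : 0 < Real.sin α) (p q : ℝ × ℝ) (hp : 0 < p.1) (hq : 0 < q.1) :
    kk α (PsiC p - PsiC q) = ((1 / (2 * π) : ℝ) : ℂ) * (coneKernel α p.1 p.2 q.1 q.2 : ℂ) * (wC α (PsiC p) : ℂ) * (wC α (PsiC q) : ℂ) := by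
  have e : PsiC p - PsiC q = (Real.log p.1 - Real.log q.1, ((p.2 - q.2 : ℝ) : AddCircle (2 * Real.pi))) := rfl
  have hsq : √(Real.sin α) * √(Real.sin α) = Real.sin α := Real.mul_self_sqrt hs.le
  rw [e, kk, kfC_coe, ck_scale α p.1 p.2 q.1 q.2 hp.le hq]
  simp only [wC, PsiC]
  rw [Real.exp_sub, Real.exp_log hp, Real.exp_log hq]
  norm_cast
  set kv := kf (Real.sin α ^ 2) (p.1 / q.1) (p.2 - q.2)
  rw [show 1 / (2 * π) * (Real.sin α * Real.cos α * (kv / q.1 ^ 2)) * (√(Real.sin α) * p.1) * (√(Real.sin α) * q.1) =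
    1 / (2 * π) * (Real.sin α * Real.cos α * (kv / q.1 ^ 2)) * (√(Real.sin α) * √(Real.sin α)) * (p.1 * q.1) by ring, hsq]
  field_simp

theorem op_exists (α : ℝ) (hα0 : 0 < α) (hαπ : α < π) :
    ∃ (K' : Lp ℂ 2 (volume : Measure GG) →L[ℂ] Lp ℂ 2 (volume : Measure GG))
      (K : Lp ℂ 2 (muCone α) →L[ℂ] Lp ℂ 2 (muCone α)),
      (∀ v, K' v = ∫ g, kk α g • tr volume g v) ∧ spectrum ℂ K = spectrum ℂ K' ∧
      (∀ f : Lp ℂ 2 (muCone α), ∀ᵐ p ∂(muCone α),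
        IntegrableOn
          (fun q : ℝ × ℝ =>
            (coneKernel α p.1 p.2 q.1 q.2 : ℂ) * f q * ((Real.sin α * q.1 : ℝ) : ℂ))
          (Set.Ioi (0:ℝ) ×ˢ Set.Ioo (0:ℝ) (2 * π)) ∧
        (K f : ℝ × ℝ → ℂ) p = ((1 / (2 * π) : ℝ) : ℂ) *
          ∫ q in Set.Ioi (0:ℝ) ×ˢ Set.Ioo (0:ℝ) (2 * π),
            (coneKernel α p.1 p.2 q.1 q.2 : ℂ) * f q * ((Real.sin α * q.1 : ℝ) : ℂ)) := by
  have hs : 0 < Real.sin α := Real.sin_pos_of_pos_of_lt_pi hα0 hαπ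
  have hk := kk_int α hα0 hαπ
  have hkm := kk_meas α
  have hw := wC_meas α
  have hw0 : ∀ g, 0 < wC α g := fun g => by unfold wC; positivity
  have hΦ := Phi_mp α hs
  obtain ⟨V, hV⟩ := tf_exists hw hw0 hΦ PsiC_meas PsiPhi
  obtain ⟨hΨ, hΦΨ⟩ := tf_inv hΦ PsiC_meas PsiPhi
  obtain ⟨K', hK'⟩ := conv_exists volume (kk α) hk
  let E := V.toContinuousLinearEquiv.conjContinuousAlgEquiv
  refine ⟨K', E.symm K', hK', AlgEquiv.spectrum_eq E.symm.toAlgEquiv K', fun f => ?_⟩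
  have hVK : V (E.symm K' f) = K' (V f) := V.apply_symm_apply _
  have h1 := hΨ.ae (conv_ae volume (kk α) hkm hk K' hK' (V f))
  have h2 := hΨ.ae (hV (E.symm K' f))
  rw [hVK] at h2
  have hpos : ∀ᵐ q ∂(muCone α), 0 < q.1 ∧ PhiC (PsiC q) = q := by
    filter_upwards [hΦΨ] with q hq
    refine ⟨?_, hq⟩
    rw [← hq]; exact Real.exp_pos _
  filter_upwards [h1, h2, hpos] with p h1 h2 hp
  obtain ⟨hp0, hp⟩ := hp
  rw [hp] at h2
  have hwp : (wC α (PsiC p) : ℂ) ≠ 0 := by exact_mod_cast (hw0 _).ne'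
  have hfm : Measurable f := (Lp.stronglyMeasurable f).measurable
  let h : ℝ × ℝ → ℂ := fun q => kk α (PsiC p - PsiC q) * f q / (wC α (PsiC q) : ℂ)
  have hh : Measurable h := by
    have := PsiC_meas
    simp only [h]; fun_prop
  have e1 : (fun g => kk α (PsiC p - g) * V f g) =ᵐ[volume] fun g => ((wC α g ^ 2 : ℝ) : ℂ) * h (PhiC g) := by
    filter_upwards [hV f] with g hg
    have : (wC α g : ℂ) ≠ 0 := by exact_mod_cast (hw0 _).ne'
    simp only [h, PsiPhi, hg]
    push_cast
    field_simp
  have e2 : h =ᵐ[muCone α] fun q => (((1 / (2 * π) : ℝ) : ℂ) * (wC α (PsiC p) : ℂ)) * ((coneKernel α p.1 p.2 q.1 q.2 : ℂ) * f q) := by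
    filter_upwards [hpos] with q hq
    have : (wC α (PsiC q) : ℂ) ≠ 0 := by exact_mod_cast (hw0 _).ne'
    simp only [h, kernel_id α hs p q hp0 hq.1]
    field_simp
  obtain ⟨t1, t2⟩ := tf_int hw hΦ h hh
  rw [← integrable_congr e1, integrable_congr e2] at t1
  rw [← integral_congr_ae e1, integral_congr_ae e2, integral_const_mul] at t2
  obtain ⟨m1, m2⟩ := mu_int α hs (fun q => (coneKernel α p.1 p.2 q.1 q.2 : ℂ) * f q)
  have hc : ((1 / (2 * π) : ℝ) : ℂ) * (wC α (PsiC p) : ℂ) ≠ 0 := by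
    refine mul_ne_zero ?_ hwp
    exact_mod_cast (by positivity : (1 / (2 * π) : ℝ) ≠ 0)
  refine ⟨m1.1 ?_, ?_⟩
  · have := t1.2 h1.1
    have := this.const_mul (((1 / (2 * π) : ℝ) : ℂ) * (wC α (PsiC p) : ℂ))⁻¹
    refine this.congr (Filter.Eventually.of_forall fun q => ?_)
    simp only []
    rw [inv_mul_cancel_left₀ hc]
  · rw [← m2]
    have := h1.2
    rw [h2, ← t2] at this
    refine mul_left_cancel₀ hwp ?_
    rw [this]; ring

end ConeAux

open MeasureTheory
open Real

namespace ConeAux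

theorem chr_neg (ξ : ℝ) (n : ℤ) (g : GG) : chr (-ξ) (-n) (-g) = chr ξ n g := by
  simp [chr, fourier_apply]

theorem spec_eq (α : ℝ) (hα0 : 0 < α) (hαπ : α < π)
    (K' : Lp ℂ 2 (volume : Measure GG) →L[ℂ] Lp ℂ 2 (volume : Measure GG))
    (hK' : ∀ v, K' v = ∫ g, kk α g • tr volume g v) :
    spectrum ℂ K' = ⋃ n : ℤ, modalCurve α n := by
  have hk := kk_int α hα0 hαπ
  have hmem : ∀ (n : ℤ) (ξ : ℝ), modalEigenvalue α n ξ ∈ spectrum ℂ K' := by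
    intro n ξ
    have := conv_approx volume (kk α) hk K' hK' (chr (-ξ) (-(-n))) (chr_cont _ _) (chr_add _ _) (chr_norm _ _)
      (fun g => |g.1|) (by fun_prop) (fun x g => by
        have := abs_abs_sub_abs_le (x - g).1 x.1
        simpa using this) (fun ε hε => weight_int ε hε)
    simp_rw [chr_neg] at this
    rw [kk_chr α hα0 hαπ, neg_neg] at this
    exact this
  have h0 : (0:ℂ) ∈ spectrum ℂ K' := by
    obtain ⟨C, hC, hb⟩ := eig_bound α hα0 hαπ
    have ht : Filter.Tendsto (fun n : ℕ => modalEigenvalue α (n : ℤ) 0) Filter.atTop (nhds 0) := by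
      refine squeeze_zero_norm (a := fun n : ℕ => C * (1 / ((n : ℝ) + 1))) (fun n => ?_) ?_
      · have := hb (n : ℤ) 0
        rw [Int.natAbs_natCast] at this
        rw [mul_one_div]; exact this
      · simpa using (tendsto_one_div_add_atTop_nhds_zero_nat (𝕜 := ℝ)).const_mul C
    exact (spectrum.isClosed K').mem_of_tendsto ht (Filter.Eventually.of_forall fun n => hmem _ _)
  ext z
  simp only [Set.mem_iUnion, modalCurve, Set.mem_union, Set.mem_setOf_eq, Set.mem_singleton_iff]
  constructor
  · intro hz
    by_cases hz0 : z = 0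
    · exact ⟨0, Or.inr hz0⟩
    obtain ⟨c, hc, hadd, hc0, hcn, hzc⟩ := gelfand_aux volume (tr volume) (tr_add volume) (tr_zero volume)
      (tr_opnorm volume) (tr_continuous volume) (kk α) hk K' hK' z hz hz0
    obtain ⟨ξ, n, h⟩ := char_GG c hc hadd hc0 hcn
    refine ⟨-n, Or.inl ⟨ξ, ?_⟩⟩
    rw [hzc, ← kk_chr α hα0 hαπ]
    refine integral_congr_ae (Filter.Eventually.of_forall fun g => ?_)
    have : c g = chr ξ n g := by
      obtain ⟨x, y⟩ := g
      induction y using QuotientAddGroup.induction_on with | H θ => ?_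
      exact (h x θ).trans (chr_apply ξ n x θ).symm
    simp only [this]
  · rintro ⟨n, ⟨ξ, rfl⟩ | rfl⟩
    · exact hmem n ξ
    · exact h0

end ConeAux


/-- The layer potential operator of the infinite straight cone on
`L²((0,∞)×(0,2π), sin α · t dt dθ)`: it is the unique bounded operator given a.e. by
`Kf(t,θ) = (1/(2π)) ∫₀^{2π} ∫₀^∞ K^{Γ_α}(t,θ,t',θ') f(t',θ') sin α t' dt' dθ'` (the
integral converging absolutely); its spectrum equals `⋃_{n∈ℤ} Π_n`, and there is
`C > 0` depending only on `α` with `sup{|z| : z ∈ Π_n} ≤ C/(|n|+1)` for all `n`. -/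
theorem cone_spectrum_L2 (α : ℝ) (hα0 : 0 < α) (hαπ : α < π) (hα2 : α ≠ π / 2) :
    ∃ K : Lp ℂ 2 (muCone α) →L[ℂ] Lp ℂ 2 (muCone α),
      (∀ f : Lp ℂ 2 (muCone α), ∀ᵐ p ∂(muCone α),
        IntegrableOn
          (fun q : ℝ × ℝ =>
            (coneKernel α p.1 p.2 q.1 q.2 : ℂ) * f q * ((sin α * q.1 : ℝ) : ℂ))
          (Set.Ioi (0:ℝ) ×ˢ Set.Ioo (0:ℝ) (2 * π)) ∧
        (K f : ℝ × ℝ → ℂ) p = ((1 / (2 * π) : ℝ) : ℂ) *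
          ∫ q in Set.Ioi (0:ℝ) ×ˢ Set.Ioo (0:ℝ) (2 * π),
            (coneKernel α p.1 p.2 q.1 q.2 : ℂ) * f q * ((sin α * q.1 : ℝ) : ℂ)) ∧
      (∀ K' : Lp ℂ 2 (muCone α) →L[ℂ] Lp ℂ 2 (muCone α),
        (∀ f : Lp ℂ 2 (muCone α), ∀ᵐ p ∂(muCone α),
          IntegrableOn
            (fun q : ℝ × ℝ =>
              (coneKernel α p.1 p.2 q.1 q.2 : ℂ) * f q * ((sin α * q.1 : ℝ) : ℂ))
            (Set.Ioi (0:ℝ) ×ˢ Set.Ioo (0:ℝ) (2 * π)) ∧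
          (K' f : ℝ × ℝ → ℂ) p = ((1 / (2 * π) : ℝ) : ℂ) *
            ∫ q in Set.Ioi (0:ℝ) ×ˢ Set.Ioo (0:ℝ) (2 * π),
              (coneKernel α p.1 p.2 q.1 q.2 : ℂ) * f q * ((sin α * q.1 : ℝ) : ℂ)) →
        K' = K) ∧
      spectrum ℂ K = (⋃ n : ℤ, modalCurve α n) ∧
      ∃ C : ℝ, 0 < C ∧ ∀ n : ℤ, ∀ z ∈ modalCurve α n, ‖z‖ ≤ C / ((n.natAbs : ℝ) + 1) := by
  obtain ⟨K', K, hK', hsp, hK⟩ := ConeAux.op_exists α hα0 hαπ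
  refine ⟨K, hK, ?_, ?_, ?_⟩
  · intro L hL
    refine ContinuousLinearMap.ext fun f => Lp.ext ?_
    filter_upwards [hK f, hL f] with p h1 h2
    rw [h1.2, h2.2]
  · rw [hsp, ConeAux.spec_eq α hα0 hαπ K' hK']
  · obtain ⟨C, hC, hb⟩ := ConeAux.eig_bound α hα0 hαπ
    refine ⟨C, hC, fun n z hz => ?_⟩
    rcases hz with ⟨ξ, rfl⟩ | hz
    · exact hb n ξ
    · rw [Set.mem_singleton_iff.1 hz, norm_zero]
      positivity
end

section
/- For x, y > 0 let H(x,y) = (x/2 + y)^{x+2y} / ((x+y)^{x+y} · y^y). Then H is differentiable in each variable with ∂_x H(x,y) = H(x,y) · log((x+2y)/(2x+2y)) ≤ 0 and ∂_y H(x,y) = H(x,y) · log((x+2y)²/(4y(x+y))) ≥ 0; consequently, for each fixed y > 0 the function x ↦ H(x,y) is nonincreasing, for each fixed x > 0 the function y ↦ H(x,y) is nondecreasing, H(x,y) ≤ 1 for all x, y > 0, and lim_{y→∞} H(x,y) = 1 for every fixed x > 0. -/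
open Real Filter

/-- The function `H(x,y) = (x/2+y)^{x+2y} / ((x+y)^{x+y} y^y)`. -/
noncomputable def Hfun (x y : ℝ) : ℝ :=
  (x / 2 + y) ^ (x + 2 * y) / ((x + y) ^ (x + y) * y ^ y)

lemma Hfun_eq_exp {x y : ℝ} (hx : 0 < x) (hy : 0 < y) :
    Hfun x y = Real.exp ((x + 2 * y) * Real.log (x / 2 + y) - (x + y) * Real.log (x + y)
      - y * Real.log y) := by
  unfold Hfun
  rw [Real.rpow_def_of_pos (by positivity), Real.rpow_def_of_pos (by positivity),
    Real.rpow_def_of_pos hy, ← Real.exp_add, ← Real.exp_sub]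
  congr 1
  ring

lemma Hfun_pos' {x y : ℝ} (hx : 0 < x) (hy : 0 < y) : 0 < Hfun x y := by
  rw [Hfun_eq_exp hx hy]; exact Real.exp_pos _

lemma Hfun_dx {x y : ℝ} (hx : 0 < x) (hy : 0 < y) :
    HasDerivAt (fun x' => Hfun x' y)
        (Hfun x y * Real.log ((x + 2 * y) / (2 * x + 2 * y))) x := by
  have hm : x / 2 + y ≠ 0 := by positivity
  have hs : x + y ≠ 0 := by positivity
  have h1 : HasDerivAt (fun t : ℝ => t + 2 * y) 1 x := (hasDerivAt_id x).add_const _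
  have h2 : HasDerivAt (fun t : ℝ => t / 2 + y) (1 / 2) x :=
    ((hasDerivAt_id x).div_const 2).add_const _
  have h3 : HasDerivAt (fun t : ℝ => t + y) 1 x := (hasDerivAt_id x).add_const _
  have h := (((h1.mul (h2.log hm)).sub (h3.mul (h3.log hs))).sub_const (y * Real.log y)).exp
  have hev : (fun x' => Hfun x' y) =ᶠ[nhds x] fun x => Real.exp ((x + 2 * y) * Real.log (x / 2 + y)
      - (x + y) * Real.log (x + y) - y * Real.log y) := by
    filter_upwards [lt_mem_nhds hx] with t ht using Hfun_eq_exp ht hy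
  refine HasDerivAt.congr_of_eventuallyEq ?_ hev
  refine h.congr_deriv ?_
  rw [Hfun_eq_exp hx hy]
  have e : (x + 2 * y) / (2 * x + 2 * y) = (x / 2 + y) / (x + y) := by
    field_simp
  rw [e, Real.log_div hm hs]
  simp only [Pi.mul_apply, Pi.sub_apply]
  congr 1
  field_simp
  ring

lemma Hfun_dy {x y : ℝ} (hx : 0 < x) (hy : 0 < y) :
    HasDerivAt (fun y' => Hfun x y')
        (Hfun x y * Real.log ((x + 2 * y) ^ 2 / (4 * y * (x + y)))) y := by
  have hm : x / 2 + y ≠ 0 := by positivity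
  have hs : x + y ≠ 0 := by positivity
  have h1 : HasDerivAt (fun t : ℝ => x + 2 * t) (2 * 1) y :=
    ((hasDerivAt_id y).const_mul 2).const_add _
  have h2 : HasDerivAt (fun t : ℝ => x / 2 + t) 1 y := (hasDerivAt_id y).const_add _
  have h3 : HasDerivAt (fun t : ℝ => x + t) 1 y := (hasDerivAt_id y).const_add _
  have h4 : HasDerivAt (fun t : ℝ => t) 1 y := hasDerivAt_id y
  have h := (((h1.mul (h2.log hm)).sub (h3.mul (h3.log hs))).sub (h4.mul (h4.log hy.ne'))).exp
  have hev : (fun y' => Hfun x y') =ᶠ[nhds y] fun y => Real.exp ((x + 2 * y) * Real.log (x / 2 + y)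
      - (x + y) * Real.log (x + y) - y * Real.log y) := by
    filter_upwards [lt_mem_nhds hy] with t ht using Hfun_eq_exp hx ht
  refine HasDerivAt.congr_of_eventuallyEq ?_ hev
  refine h.congr_deriv ?_
  rw [Hfun_eq_exp hx hy]
  have e : (x + 2 * y) ^ 2 / (4 * y * (x + y)) = (x / 2 + y) ^ 2 / (y * (x + y)) := by
    field_simp
    ring
  rw [e, Real.log_div (pow_ne_zero 2 hm) (mul_ne_zero hy.ne' hs), Real.log_mul hy.ne' hs,
    Real.log_pow]
  simp only [Pi.mul_apply, Pi.sub_apply]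
  congr 1
  push_cast
  field_simp
  ring

lemma Hfun_dx_nonpos {x y : ℝ} (hx : 0 < x) (hy : 0 < y) :
    Hfun x y * Real.log ((x + 2 * y) / (2 * x + 2 * y)) ≤ 0 := by
  refine mul_nonpos_of_nonneg_of_nonpos (Hfun_pos' hx hy).le
    (Real.log_nonpos (by positivity) ?_)
  rw [div_le_one (by positivity)]
  linarith

lemma Hfun_dy_nonneg {x y : ℝ} (hx : 0 < x) (hy : 0 < y) :
    0 ≤ Hfun x y * Real.log ((x + 2 * y) ^ 2 / (4 * y * (x + y))) := by
  refine mul_nonneg (Hfun_pos' hx hy).le (Real.log_nonneg ?_)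
  rw [one_le_div (by positivity)]
  nlinarith [sq_nonneg x]

lemma Hfun_le_one' {x y : ℝ} (hx : 0 < x) (hy : 0 < y) : Hfun x y ≤ 1 := by
  rw [Hfun_eq_exp hx hy, Real.exp_le_one_iff]
  have hm : 0 < x / 2 + y := by positivity
  have hs : 0 < x + y := by positivity
  have a := Real.log_le_sub_one_of_pos (div_pos hm hs)
  have b := Real.log_le_sub_one_of_pos (div_pos hm hy)
  rw [Real.log_div hm.ne' hs.ne'] at a
  rw [Real.log_div hm.ne' hy.ne'] at b
  have a' := mul_le_mul_of_nonneg_left a hs.le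
  have b' := mul_le_mul_of_nonneg_left b hy.le
  have e1 : (x + y) * ((x / 2 + y) / (x + y) - 1) = - x / 2 := by field_simp; ring
  have e2 : y * ((x / 2 + y) / y - 1) = x / 2 := by field_simp; ring
  rw [e1] at a'
  rw [e2] at b'
  linarith

lemma Hfun_lower {x y : ℝ} (hx : 0 < x) (hy : 0 < y) : 1 - x ^ 2 / 2 / y ≤ Hfun x y := by
  rw [Hfun_eq_exp hx hy]
  refine le_trans ?_ (Real.add_one_le_exp _)
  have hm : 0 < x / 2 + y := by positivity
  have hs : 0 < x + y := by positivity
  have a := Real.log_le_sub_one_of_pos (div_pos hs hm)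
  have b := Real.log_le_sub_one_of_pos (div_pos hy hm)
  rw [Real.log_div hs.ne' hm.ne'] at a
  rw [Real.log_div hy.ne' hm.ne'] at b
  have a' := mul_le_mul_of_nonneg_left a hs.le
  have b' := mul_le_mul_of_nonneg_left b hy.le
  have e : (x + y) * ((x + y) / (x / 2 + y) - 1) + y * (y / (x / 2 + y) - 1)
      = x ^ 2 / 2 / (x / 2 + y) := by field_simp; ring
  have f : x ^ 2 / 2 / (x / 2 + y) ≤ x ^ 2 / 2 / y :=
    div_le_div_of_nonneg_left (by positivity) hy (by linarith)
  linarith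

/-- `H(x,y) = (x/2+y)^{x+2y}/((x+y)^{x+y} y^y)` is differentiable in each variable with
`∂ₓH = H log((x+2y)/(2x+2y)) ≤ 0` and `∂_yH = H log((x+2y)²/(4y(x+y))) ≥ 0`; hence `H`
is nonincreasing in `x`, nondecreasing in `y`, satisfies `H(x,y) ≤ 1`, and
`H(x,y) → 1` as `y → ∞` for fixed `x > 0`. -/
theorem Hfun_properties :
    (∀ x y : ℝ, 0 < x → 0 < y →
      HasDerivAt (fun x' => Hfun x' y)
        (Hfun x y * Real.log ((x + 2 * y) / (2 * x + 2 * y))) x ∧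
      Hfun x y * Real.log ((x + 2 * y) / (2 * x + 2 * y)) ≤ 0 ∧
      HasDerivAt (fun y' => Hfun x y')
        (Hfun x y * Real.log ((x + 2 * y) ^ 2 / (4 * y * (x + y)))) y ∧
      0 ≤ Hfun x y * Real.log ((x + 2 * y) ^ 2 / (4 * y * (x + y)))) ∧
    (∀ y : ℝ, 0 < y → ∀ x₁ x₂ : ℝ, 0 < x₁ → x₁ ≤ x₂ → Hfun x₂ y ≤ Hfun x₁ y) ∧
    (∀ x : ℝ, 0 < x → ∀ y₁ y₂ : ℝ, 0 < y₁ → y₁ ≤ y₂ → Hfun x y₁ ≤ Hfun x y₂) ∧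
    (∀ x y : ℝ, 0 < x → 0 < y → Hfun x y ≤ 1) ∧
    (∀ x : ℝ, 0 < x → Tendsto (fun y => Hfun x y) atTop (nhds 1)) := by
  refine ⟨fun x y hx hy => ⟨Hfun_dx hx hy, Hfun_dx_nonpos hx hy, Hfun_dy hx hy,
    Hfun_dy_nonneg hx hy⟩, ?_, ?_, fun x y hx hy => Hfun_le_one' hx hy, ?_⟩
  · intro y hy x₁ x₂ h1 h12
    have h : AntitoneOn (fun x => Hfun x y) (Set.Ioi 0) := by
      refine antitoneOn_of_deriv_nonpos (convex_Ioi 0)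
        (fun t ht => (Hfun_dx ht hy).continuousAt.continuousWithinAt) ?_ ?_
      · intro t ht
        rw [interior_Ioi] at ht
        exact (Hfun_dx ht hy).differentiableAt.differentiableWithinAt
      · intro t ht
        rw [interior_Ioi] at ht
        rw [(Hfun_dx ht hy).deriv]
        exact Hfun_dx_nonpos ht hy
    exact h h1 (lt_of_lt_of_le h1 h12) h12
  · intro x hx y₁ y₂ h1 h12
    have h : MonotoneOn (fun y => Hfun x y) (Set.Ioi 0) := by
      refine monotoneOn_of_deriv_nonneg (convex_Ioi 0)
        (fun t ht => (Hfun_dy hx ht).continuousAt.continuousWithinAt) ?_ ?_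
      · intro t ht
        rw [interior_Ioi] at ht
        exact (Hfun_dy hx ht).differentiableAt.differentiableWithinAt
      · intro t ht
        rw [interior_Ioi] at ht
        rw [(Hfun_dy hx ht).deriv]
        exact Hfun_dy_nonneg hx ht
    exact h h1 (lt_of_lt_of_le h1 h12) h12
  · intro x hx
    have h0 : Tendsto (fun y : ℝ => 1 - x ^ 2 / 2 / y) atTop (nhds 1) := by
      have := (tendsto_const_nhds (x := (1 : ℝ))).sub
        (tendsto_id.const_div_atTop (x ^ 2 / 2) : Tendsto (fun y : ℝ => x ^ 2 / 2 / y) atTop (nhds 0))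
      simpa using this
    refine tendsto_of_tendsto_of_tendsto_of_le_of_le' h0 tendsto_const_nhds ?_ ?_
    · filter_upwards [eventually_gt_atTop 0] with y hy using Hfun_lower hx hy
    · filter_upwards [eventually_gt_atTop 0] with y hy using Hfun_le_one' hx hy
end
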